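/- arXiv:1109.1440 — 6 statements merged into one kernel-verified Lean document; each statement's English description precedes it below -/
import Mathlib

section
/- Let C, D₁, D₂ be subgroups of G with C non-trivial, C ⊆ D₁ and C ⊆ D₂. Then 𝒞(C; D₁) ∩ 𝒞(C; D₂) = 𝒞(C; ⟨D₁, D₂⟩), where ⟨D₁, D₂⟩ is the subgroup of G generated by D₁ and D₂. -/
/-- The subgroup `K` of `Γ` is conjugate to the subgroup `H`. -/
def SubConj (Γ : Type*) [Group Γ] (H K : Subgroup Γ) : Prop :=
  ∃ γ : Γ, K = Subgroup.map (MulAut.conj γ).toMonoidHom H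

/-!
After conjugating, one is given `H₁` and `H₂` that both meet `P = π⁻¹(C)` exactly in `K`. Hence `K`
is normal in `N = H₁ ⊔ H₂`, and `N / K` is an extension of a cyclic group of order `r` (`r = 0` if
it is infinite) by the group `M = (N ∩ P) / K`, which is abelian because `P ≤ K ⊔ L`. For `x`
lifting a generator, the extension splits as soon as `x ^ r` is a norm from `M`. If `x ^ u` lies in
`Hᵢ` modulo `M`, then `u` annihilates the class of `x ^ r` modulo norms, because `Hᵢ` meets `M`
trivially. Since `H₁` and `H₂` generate the quotient, exponents `u₁` and `u₂` for them can be chosen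
with `u₁ + u₂ = 1`, so `x ^ r` is a norm. Lifting a complement of `M` back to `Γ` gives the required
subgroup.
-/

open scoped IsMulCommutative

section CyclicNorm

variable {M : Type*} [CommMonoid M]

/-- The norm `a ↦ a * σ a * ⋯ * σ ^ (n - 1) a`. When `σ ^ n = 1` this is the usual norm of the
action of the cyclic group of order `n` generated by `σ`; no such relation is imposed here. -/
def cyclicNorm (σ : MulAut M) (n : ℕ) : M →* M :=
  ∏ i ∈ Finset.range n, (σ ^ i).toMonoidHom

lemma cyclicNorm_apply (σ : MulAut M) (n : ℕ) (a : M) :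
    cyclicNorm σ n a = ∏ i ∈ Finset.range n, (σ ^ i) a := by
  simp [cyclicNorm, MonoidHom.finsetProd_apply]

@[simp]
lemma cyclicNorm_zero_apply (σ : MulAut M) (a : M) : cyclicNorm σ 0 a = 1 := by
  simp [cyclicNorm_apply]

@[simp]
lemma cyclicNorm_one_apply (σ : MulAut M) (a : M) : cyclicNorm σ 1 a = a := by
  simp [cyclicNorm_apply]

lemma cyclicNorm_add_apply (σ : MulAut M) (m n : ℕ) (a : M) :
    cyclicNorm σ (m + n) a = cyclicNorm σ m a * cyclicNorm σ n ((σ ^ m) a) := by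
  simp only [cyclicNorm_apply, Finset.prod_range_add, pow_add, ← MulAut.mul_apply,
    (Commute.pow_pow_self σ _ _).eq]

lemma map_cyclicNorm (σ : MulAut M) (n : ℕ) (a : M) :
    σ (cyclicNorm σ n a) = cyclicNorm σ n (σ a) := by
  simp only [cyclicNorm_apply, map_prod, ← MulAut.mul_apply, ← pow_succ, ← pow_succ']

lemma cyclicNorm_mul_apply (σ : MulAut M) (k s : ℕ) (a : M) :
    cyclicNorm σ (k * s) a = cyclicNorm σ k (cyclicNorm (σ ^ k) s a) := by
  induction s generalizing a with
  | zero => simp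
  | succ s ih =>
    rw [Nat.mul_succ, add_comm, cyclicNorm_add_apply, ih, add_comm s, cyclicNorm_add_apply, map_mul,
      cyclicNorm_one_apply, pow_one]

lemma cyclicNorm_apply_of_fixed {σ : MulAut M} {a : M} (ha : σ a = a) (n : ℕ) :
    cyclicNorm σ n a = a ^ n := by
  have hpow (i : ℕ) : (σ ^ i) a = a := by
    induction i with
    | zero => rfl
    | succ i ih => rw [pow_succ, MulAut.mul_apply, ha, ih]
  simp [cyclicNorm_apply, hpow]

end CyclicNorm

lemma zpow_gcd_orderOf_mem {G : Type*} [Group G] {B : Subgroup G} {g : G} {u : ℤ}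
    (hu : g ^ u ∈ B) : g ^ u.gcd (orderOf g) ∈ B := by
  rw [← zpow_natCast, Int.gcd_eq_gcd_ab, zpow_add, zpow_mul, zpow_mul, zpow_natCast,
    pow_orderOf_eq_one, one_zpow, mul_one]
  exact zpow_mem hu _

lemma isCyclic_quotient_comap {G G' : Type*} [Group G] [Group G'] (f : G →* G')
    (N : Subgroup G') [N.Normal] [IsCyclic (G' ⧸ N)] : IsCyclic (G ⧸ N.comap f) := by
  refine isCyclic_of_injective (QuotientGroup.map _ N f le_rfl) ?_
  rw [injective_iff_map_eq_one]
  rintro ⟨g⟩ hg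
  exact (QuotientGroup.eq_one_iff g).2 ((QuotientGroup.eq_one_iff (f g)).1 hg)

lemma isCompl_zpowers_of_pow_orderOf_eq_one {Q : Type*} [Group Q] {M : Subgroup Q} [M.Normal]
    {y : Q} (hgen : ∀ q : Q ⧸ M, q ∈ Subgroup.zpowers (y : Q ⧸ M))
    (hy : y ^ orderOf (y : Q ⧸ M) = 1) : IsCompl (Subgroup.zpowers y) M := by
  constructor
  · rw [Subgroup.disjoint_def]
    rintro _ ⟨k, rfl⟩ hk
    have hk' : (y : Q ⧸ M) ^ k = 1 := (QuotientGroup.eq_one_iff (y ^ k)).2 hk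
    obtain ⟨t, rfl⟩ := orderOf_dvd_iff_zpow_eq_one.2 hk'
    simp only [zpow_mul, zpow_natCast, hy, one_zpow]
  · rw [codisjoint_iff, Subgroup.eq_top_iff']
    intro q
    obtain ⟨k, hk⟩ := hgen q
    have hM : (y ^ k)⁻¹ * q ∈ M := QuotientGroup.eq.1 hk
    simpa using Subgroup.mul_mem_sup (Subgroup.zpow_mem_zpowers y k) hM

section AbelianNormalSubgroup

variable {Q : Type*} [Group Q] {M : Subgroup Q} [M.Normal] [IsMulCommutative M]

lemma cyclicNorm_conjNormal_mul_pow (x : Q) (n : ℕ) (a : M) :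
    ((cyclicNorm (MulAut.conjNormal x) n a : M) : Q) * x ^ n = (a * x) ^ n := by
  induction n with
  | zero => simp
  | succ n ih =>
    rw [pow_succ' (_ * x), ← ih, add_comm, cyclicNorm_add_apply, pow_one, ← map_cyclicNorm]
    simp [pow_add, mul_assoc]

lemma cyclicNorm_conjNormal_inv_of_pow_eq_one {x : Q} {k s : ℕ} {c : M}
    (hc : ((c : Q) * x ^ k) ^ s = 1) :
    ((cyclicNorm (MulAut.conjNormal x) (k * s) c⁻¹ : M) : Q) = (x ^ (k * s)) ^ k := by
  set b : M := cyclicNorm (MulAut.conjNormal (x ^ k)) s c⁻¹ with hb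
  have hbx : (b : Q) = x ^ (k * s) := by
    rw [← cyclicNorm_conjNormal_mul_pow, ← pow_mul] at hc
    rw [hb, map_inv, Subgroup.coe_inv, inv_eq_of_mul_eq_one_right hc]
  have hfixed : MulAut.conjNormal x b = b := by
    ext
    rw [MulAut.conjNormal_apply, hbx, ← pow_succ', pow_succ, mul_inv_cancel_right]
  rw [cyclicNorm_mul_apply, ← map_pow, ← hb, cyclicNorm_apply_of_fixed hfixed, Subgroup.coe_pow,
    hbx]

-- This is corestriction ∘ restriction = index on `H²` of a cyclic group: a subgroup `H` disjoint
-- from `M` splits the extension over `⟨x ^ k⟩`, `k = gcd(u, r)`, so `k` kills the class of `x ^ r`.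
lemma pow_orderOf_zpow_mem_range_cyclicNorm {H : Subgroup Q} (hH : Disjoint H M) {x : Q} {u : ℤ}
    (hu : (x : Q ⧸ M) ^ u ∈ H.map (QuotientGroup.mk' M)) :
    (x ^ orderOf (x : Q ⧸ M)) ^ u ∈
      (cyclicNorm (MulAut.conjNormal x : MulAut M) (orderOf (x : Q ⧸ M))).range.map M.subtype := by
  obtain ⟨h, hhH, hhx⟩ := zpow_gcd_orderOf_mem hu
  obtain ⟨v, hv⟩ := Int.gcd_dvd_left u (orderOf (x : Q ⧸ M))
  obtain ⟨s, hs⟩ : u.gcd (orderOf (x : Q ⧸ M)) ∣ orderOf (x : Q ⧸ M) :=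
    Int.natCast_dvd_natCast.1 (Int.gcd_dvd_right u _)
  set k := u.gcd (orderOf (x : Q ⧸ M))
  have hc : h * (x ^ k)⁻¹ ∈ M := by
    rw [← QuotientGroup.eq_one_iff]
    exact mul_inv_eq_one.2 hhx
  have hpow : h ^ s = 1 := by
    refine Subgroup.disjoint_def.1 hH (pow_mem hhH s) ((QuotientGroup.eq_one_iff _).1 ?_)
    rw [← QuotientGroup.mk'_apply, map_pow, hhx, ← pow_mul, ← hs, pow_orderOf_eq_one]
  have hnorm := cyclicNorm_conjNormal_inv_of_pow_eq_one (x := x) (k := k) (s := s)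
    (c := (⟨_, hc⟩ : M)) (by simpa using hpow)
  rw [hv, zpow_mul, zpow_natCast, hs, ← hnorm]
  exact zpow_mem (Subgroup.mem_map_of_mem M.subtype (MonoidHom.mem_range.2 ⟨_, rfl⟩)) v

lemma exists_isCompl_of_disjoint_of_sup_eq_top [IsCyclic (Q ⧸ M)] {H₁ H₂ : Subgroup Q}
    (h₁ : Disjoint H₁ M) (h₂ : Disjoint H₂ M) (h : H₁ ⊔ H₂ ⊔ M = ⊤) :
    ∃ H : Subgroup Q, IsCompl H M := by
  obtain ⟨x, hx⟩ : ∃ x : Q, ∀ q : Q ⧸ M, q ∈ Subgroup.zpowers (x : Q ⧸ M) :=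
    (QuotientGroup.mk'_surjective M).exists.1 IsCyclic.exists_generator
  have hsup : H₁.map (QuotientGroup.mk' M) ⊔ H₂.map (QuotientGroup.mk' M) = ⊤ := by
    rw [← Subgroup.map_sup, ← Subgroup.map_top_of_surjective _ (QuotientGroup.mk'_surjective M),
      ← h, Subgroup.map_sup _ M, QuotientGroup.map_mk'_self, sup_bot_eq]
  have := IsCyclic.isMulCommutative (α := Q ⧸ M)
  obtain ⟨y, hy, z, hz, hyz⟩ :=
    Subgroup.mem_sup_of_normal_right.1 (hsup ▸ Subgroup.mem_top (x : Q ⧸ M))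
  obtain ⟨u, rfl⟩ := hx y
  have hz' : (x : Q ⧸ M) ^ (-u + 1) = z := by
    rw [zpow_add_one, zpow_neg, eq_inv_mul_of_mul_eq hyz]
  have hnorm := mul_mem (pow_orderOf_zpow_mem_range_cyclicNorm h₁ hy)
    (pow_orderOf_zpow_mem_range_cyclicNorm h₂ (hz' ▸ hz))
  rw [← zpow_add, add_neg_cancel_left, zpow_one] at hnorm
  obtain ⟨_, ⟨e, rfl⟩, he⟩ := hnorm
  have hmk : (((e⁻¹ : M) * x : Q) : Q ⧸ M) = x := by
    rw [QuotientGroup.mk_mul, (QuotientGroup.eq_one_iff _).2 (e⁻¹).2, one_mul]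
  refine ⟨_, isCompl_zpowers_of_pow_orderOf_eq_one (y := (e⁻¹ : M) * x) (hmk.symm ▸ hx) ?_⟩
  rw [hmk, ← cyclicNorm_conjNormal_mul_pow, map_inv, ← he]
  exact inv_mul_cancel _

end AbelianNormalSubgroup

lemma exists_inf_eq_sup_eq_top {Q : Type*} [Group Q] {K P H₁ H₂ : Subgroup Q} [K.Normal]
    [P.Normal] [IsMulCommutative (P.map (QuotientGroup.mk' K))] [IsCyclic (Q ⧸ P)]
    (h₁ : H₁ ⊓ P = K) (h₂ : H₂ ⊓ P = K) (h : H₁ ⊔ H₂ ⊔ P = ⊤) :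
    ∃ H : Subgroup Q, H ⊓ P = K ∧ H ⊔ P = ⊤ := by
  let q := QuotientGroup.mk' K
  have hq : Function.Surjective q := QuotientGroup.mk'_surjective K
  have comap_map_of_le {H : Subgroup Q} (hH : K ≤ H) : (H.map q).comap q = H := by
    rw [QuotientGroup.comap_map_mk', sup_eq_right.2 hH]
  have hKP : K ≤ P := h₁ ▸ inf_le_right
  have disjoint_map {H : Subgroup Q} (hH : H ⊓ P = K) : Disjoint (H.map q) (P.map q) := by
    rw [disjoint_iff]
    apply Subgroup.comap_injective hq
    rw [Subgroup.comap_inf, comap_map_of_le hKP, comap_map_of_le (hH ▸ inf_le_left), hH,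
      MonoidHom.comap_bot, QuotientGroup.ker_mk']
  have hsup : H₁.map q ⊔ H₂.map q ⊔ P.map q = ⊤ := by
    rw [← Subgroup.map_sup, ← Subgroup.map_sup, h, Subgroup.map_top_of_surjective q hq]
  have : IsCyclic ((Q ⧸ K) ⧸ P.map q) :=
    (QuotientGroup.quotientQuotientEquivQuotient K P hKP).isCyclic.2 ‹_›
  obtain ⟨H, hH⟩ :=
    exists_isCompl_of_disjoint_of_sup_eq_top (disjoint_map h₁) (disjoint_map h₂) hsup
  refine ⟨H.comap q, ?_, ?_⟩
  · rw [← comap_map_of_le hKP, ← Subgroup.comap_inf, hH.inf_eq_bot, MonoidHom.comap_bot,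
      QuotientGroup.ker_mk']
  · rw [← comap_map_of_le hKP, Subgroup.comap_sup_eq q _ _ hq, hH.sup_eq_top, Subgroup.comap_top]

lemma map_inf_comap {G G' : Type*} [Group G] [Group G'] (f : G →* G') (H : Subgroup G)
    (D : Subgroup G') : (H ⊓ D.comap f).map f = H.map f ⊓ D :=
  SetLike.coe_injective (Set.image_inter_preimage _ _ _)

lemma le_normalizer_of_inf_eq {Γ : Type*} [Group Γ] {H K P : Subgroup Γ} [P.Normal]
    (h : H ⊓ P = K) : H ≤ Subgroup.normalizer (K : Set Γ) := by
  rw [← h]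
  exact (le_inf Subgroup.le_normalizer Subgroup.le_normalizer_of_normal).trans
    Subgroup.inf_normalizer_le_normalizer_inf

lemma subgroupOf_sup_le_of_le_sup {Γ : Type*} [Group Γ] {K L P N : Subgroup Γ} [L.Normal]
    (hKN : K ≤ N) (hP : P ≤ K ⊔ L) : P.subgroupOf N ≤ K.subgroupOf N ⊔ L.subgroupOf N := by
  rintro ⟨p, hpN⟩ hp
  obtain ⟨k, hk, l, hl, rfl⟩ := Subgroup.mem_sup_of_normal_right.1 (hP hp)
  have hlN : l ∈ N := (Subgroup.mul_mem_cancel_left N (hKN hk)).1 hpN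
  exact Subgroup.mul_mem_sup (x := (⟨k, hKN hk⟩ : N)) (y := ⟨l, hlN⟩) hk hl

lemma exists_inf_eq_sup_eq {Γ : Type*} [Group Γ] {K L P H₁ H₂ : Subgroup Γ} [L.Normal]
    [IsMulCommutative L] [P.Normal] [IsCyclic (Γ ⧸ P)] (hP : P ≤ K ⊔ L)
    (h₁ : H₁ ⊓ P = K) (h₂ : H₂ ⊓ P = K) :
    ∃ H : Subgroup Γ, H ⊓ P = K ∧ H ⊔ P = H₁ ⊔ H₂ ⊔ P := by
  set N := H₁ ⊔ H₂
  have hKN : K ≤ N := (h₁ ▸ inf_le_left : K ≤ H₁).trans le_sup_left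
  have : (K.subgroupOf N).Normal := (Subgroup.normal_subgroupOf_iff_le_normalizer hKN).2 <|
    sup_le (le_normalizer_of_inf_eq h₁) (le_normalizer_of_inf_eq h₂)
  let q := QuotientGroup.mk' (K.subgroupOf N)
  have hle : (P.subgroupOf N).map q ≤ (L.subgroupOf N).map q := by
    rw [Subgroup.map_le_iff_le_comap, QuotientGroup.comap_map_mk']
    exact subgroupOf_sup_le_of_le_sup hKN hP
  have : IsMulCommutative ((P.subgroupOf N).map q) :=
    .of_setLike_mul_comm fun a ha b hb ↦ setLike_mul_comm (hle ha) (hle hb)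
  have : IsCyclic (N ⧸ P.subgroupOf N) := isCyclic_quotient_comap N.subtype P
  obtain ⟨H, hHP, hH⟩ := exists_inf_eq_sup_eq_top (K := K.subgroupOf N) (P := P.subgroupOf N)
    (H₁ := H₁.subgroupOf N) (H₂ := H₂.subgroupOf N)
    (by rw [← h₁]; rfl) (by rw [← h₂]; rfl)
    (by rw [← Subgroup.subgroupOf_sup le_sup_left le_sup_right, Subgroup.subgroupOf_self,
      top_sup_eq])
  refine ⟨H.map N.subtype, ?_, ?_⟩
  · rw [← map_inf_comap]
    exact (congrArg _ hHP).trans (Subgroup.map_subgroupOf_eq_of_le hKN)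
  · have hN : H.map N.subtype ⊔ P ⊓ N = N := by
      rw [← Subgroup.subgroupOf_map_subtype, ← Subgroup.map_sup, hH, ← MonoidHom.range_eq_map,
        Subgroup.range_subtype]
    calc H.map N.subtype ⊔ P = H.map N.subtype ⊔ P ⊓ N ⊔ P := by
          rw [sup_assoc, sup_eq_right.2 (inf_le_left : P ⊓ N ≤ P)]
      _ = N ⊔ P := congrArg (· ⊔ P) hN

section RestrictionImage

variable {Γ : Type*} [Group Γ] {L : Subgroup Γ} [L.Normal] {C D E : Subgroup (Γ ⧸ L)}
  {K : Subgroup Γ}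

/-- The class `(K)` belongs to `𝒞(C; D)`: it is the image of a class in `𝒞(D)` under `i_{C ⊆ D}`. -/
def MemRestrictionImage (C D : Subgroup (Γ ⧸ L)) (K : Subgroup Γ) : Prop :=
  ∃ H : Subgroup Γ, H.map (QuotientGroup.mk' L) = D ∧
    SubConj Γ (H ⊓ C.comap (QuotientGroup.mk' L)) K

lemma MemRestrictionImage.mono (hCD : C ≤ D) (hDE : D ≤ E) (h : MemRestrictionImage C E K) :
    MemRestrictionImage C D K := by
  obtain ⟨H, rfl, hK⟩ := h
  refine ⟨H ⊓ D.comap (QuotientGroup.mk' L), ?_, ?_⟩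
  · rw [map_inf_comap, inf_eq_right.2 hDE]
  · rwa [inf_assoc, inf_eq_right.2 (Subgroup.comap_mono hCD)]

lemma mk'_comp_conj [IsMulCommutative (Γ ⧸ L)] (γ : Γ) :
    (QuotientGroup.mk' L).comp (MulAut.conj γ).toMonoidHom = QuotientGroup.mk' L := by
  ext g
  simp [mul_comm' (γ : Γ ⧸ L)]

lemma memRestrictionImage_iff [IsMulCommutative (Γ ⧸ L)] : MemRestrictionImage C D K ↔
    ∃ H : Subgroup Γ, H.map (QuotientGroup.mk' L) = D ∧ H ⊓ C.comap (QuotientGroup.mk' L) = K := by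
  constructor
  · rintro ⟨H, rfl, γ, rfl⟩
    refine ⟨H.map (MulAut.conj γ).toMonoidHom, by rw [Subgroup.map_map, mk'_comp_conj], ?_⟩
    rw [← map_inf_comap, Subgroup.comap_comap, mk'_comp_conj]
  · rintro ⟨H, hH, hK⟩
    exact ⟨H, hH, 1, by ext; simp [hK]⟩

lemma MemRestrictionImage.sup [IsMulCommutative L] [IsMulCommutative (Γ ⧸ L)]
    [IsCyclic ((Γ ⧸ L) ⧸ C)] {D₁ D₂ : Subgroup (Γ ⧸ L)}
    (hK : K.map (QuotientGroup.mk' L) = C)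
    (h₁ : MemRestrictionImage C D₁ K) (h₂ : MemRestrictionImage C D₂ K) :
    MemRestrictionImage C (D₁ ⊔ D₂) K := by
  rw [memRestrictionImage_iff] at *
  obtain ⟨H₁, rfl, hK₁⟩ := h₁
  obtain ⟨H₂, rfl, hK₂⟩ := h₂
  have := isCyclic_quotient_comap (QuotientGroup.mk' L) C
  have hP : C.comap (QuotientGroup.mk' L) ≤ K ⊔ L := by
    rw [← hK, Subgroup.comap_map_eq, QuotientGroup.ker_mk']
  have le_map {H : Subgroup Γ} (hH : H ⊓ C.comap (QuotientGroup.mk' L) = K) :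
      C ≤ H.map (QuotientGroup.mk' L) :=
    hK ▸ Subgroup.map_mono (hH ▸ inf_le_left)
  obtain ⟨H, hHK, hH⟩ := exists_inf_eq_sup_eq hP hK₁ hK₂
  refine ⟨H, ?_, hHK⟩
  simpa only [Subgroup.map_sup, QuotientGroup.mk'_surjective,
    Subgroup.map_comap_eq_self_of_surjective, sup_eq_left.2 (le_map hHK),
    sup_eq_left.2 (le_sup_of_le_left (le_map hK₁))] using
    congrArg (Subgroup.map (QuotientGroup.mk' L)) hH

end RestrictionImage

theorem statement4_general {Γ : Type*} [Group Γ] (L : Subgroup Γ) [L.Normal] [IsMulCommutative L]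
    [IsMulCommutative (Γ ⧸ L)] (C D₁ D₂ : Subgroup (Γ ⧸ L)) [IsCyclic ((Γ ⧸ L) ⧸ C)]
    (hCD₁ : C ≤ D₁) (hCD₂ : C ≤ D₂) (K : Subgroup Γ) (hK : K.map (QuotientGroup.mk' L) = C) :
    MemRestrictionImage C D₁ K ∧ MemRestrictionImage C D₂ K ↔ MemRestrictionImage C (D₁ ⊔ D₂) K :=
  ⟨fun ⟨h₁, h₂⟩ ↦ h₁.sup hK h₂, fun h ↦ ⟨h.mono hCD₁ le_sup_left, h.mono hCD₂ le_sup_right⟩⟩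

/-- Let `1 → L → Γ → G → 1` be as in the paper (`L ≅ ℤⁿ` normal, `G = Γ/L` cyclic of order `m`,
conjugation action of `G` on `L` free outside the origin), and let `C, D₁, D₂ ⊆ G` be subgroups
with `C` non-trivial, `C ≤ D₁` and `C ≤ D₂`.  Then `𝒞(C; D₁) ∩ 𝒞(C; D₂) = 𝒞(C; ⟨D₁, D₂⟩)`:
for every subgroup `K ⊆ Γ` with `π(K) = C`, the class of `K` lies in the image of both
`i_{C⊆D₁}` and `i_{C⊆D₂}` if and only if it lies in the image of `i_{C⊆D₁⊔D₂}`. -/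
theorem statement4 (n m : ℕ) (hn : 1 ≤ n) (hm : 1 ≤ m)
    (Γ : Type*) [Group Γ] (L : Subgroup Γ) [L.Normal]
    (hL : Nonempty (L ≃* Multiplicative (Fin n → ℤ)))
    (hcyc : IsCyclic (Γ ⧸ L)) (hcard : Nat.card (Γ ⧸ L) = m)
    (hfree : ∀ γ : Γ, γ ∉ L → ∀ x : Γ, x ∈ L → x ≠ 1 → γ * x * γ⁻¹ ≠ x)
    (C D₁ D₂ : Subgroup (Γ ⧸ L)) (hC : C ≠ ⊥) (hCD₁ : C ≤ D₁) (hCD₂ : C ≤ D₂)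
    (K : Subgroup Γ) (hK : Subgroup.map (QuotientGroup.mk' L) K = C) :
    ((∃ H₁ : Subgroup Γ, Subgroup.map (QuotientGroup.mk' L) H₁ = D₁ ∧
        SubConj Γ (H₁ ⊓ Subgroup.comap (QuotientGroup.mk' L) C) K) ∧
     (∃ H₂ : Subgroup Γ, Subgroup.map (QuotientGroup.mk' L) H₂ = D₂ ∧
        SubConj Γ (H₂ ⊓ Subgroup.comap (QuotientGroup.mk' L) C) K)) ↔
    (∃ H : Subgroup Γ, Subgroup.map (QuotientGroup.mk' L) H = D₁ ⊔ D₂ ∧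
        SubConj Γ (H ⊓ Subgroup.comap (QuotientGroup.mk' L) C) K) := by
  obtain ⟨e⟩ := hL
  have : IsMulCommutative L := .of_comm fun a b ↦ e.injective <| by rw [map_mul, map_mul, mul_comm]
  have := IsCyclic.isMulCommutative (α := Γ ⧸ L)
  have : IsCyclic ((Γ ⧸ L) ⧸ C) := isCyclic_of_surjective _ (QuotientGroup.mk'_surjective C)
  exact statement4_general L C D₁ D₂ hCD₁ hCD₂ K hK
end

section
/- Let p be a prime and r ≥ 1, and let 1 ≤ j ≤ r. Let Φ denote the p^r-th cyclotomic polynomial, R := ℤ[X]/(Φ), and x the residue class of X in R. Let C be a cyclic group of order p^{r−j} with generator c, and regard the quotient R/(x^{p^{r−j}} − 1)R as a module over the group ring ℤ[C] by letting c act as multiplication by the class of x. Then R/(x^{p^{r−j}} − 1)R is isomorphic as a ℤ[C]-module to the group algebra (ℤ/p)[C] (with C acting by left translation). -/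
/-!
If `X ^ p ^ k = 1` for some `k < r`, then each of the `p` terms of
`Φ_{p ^ r} = ∑ i < p, (X ^ p ^ (r - 1)) ^ i` equals `1`, so that `Φ_{p ^ r} = p`. Hence the ideals
`(Φ_{p ^ r}, X ^ p ^ k - 1)` and `(p, X ^ p ^ k - 1)` coincide. The latter is the kernel of the
surjection onto the group algebra modulo `p` that sends `X` to a generator of the cyclic group,
because reduction modulo `X ^ n - 1` leaves a polynomial whose coefficients are those of its image
at the distinct powers of the generator.
-/

section CyclotomicPrimePow

open Polynomial

variable (R : Type*) [CommRing R] {p k r : ℕ}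

theorem X_pow_prime_pow_sub_one_dvd_cyclotomic_prime_pow_sub (hp : p.Prime) (hkr : k < r) :
    (X ^ p ^ k - 1 : R[X]) ∣ cyclotomic (p ^ r) R - C (p : R) := by
  obtain ⟨d, rfl⟩ := Nat.exists_eq_add_of_lt hkr
  have sum_sub_one : cyclotomic (p ^ (k + d + 1)) R - C (p : R) =
      ∑ i ∈ Finset.range p, ((X ^ p ^ (k + d)) ^ i - 1) := by
    simp [cyclotomic_prime_pow_eq_geom_sum hp]
  rw [sum_sub_one]
  refine Finset.dvd_sum fun i _ ↦ ?_
  rw [pow_add, ← pow_mul, mul_assoc]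
  exact pow_one_sub_dvd_pow_mul_sub_one X _ _

theorem span_cyclotomic_prime_pow_sup_span_X_pow_sub_one (hp : p.Prime) (hkr : k < r) :
    Ideal.span {cyclotomic (p ^ r) R} ⊔ Ideal.span {X ^ p ^ k - 1} =
      (Ideal.span {(p : R)}).map C ⊔ Ideal.span {X ^ p ^ k - 1} := by
  obtain ⟨v, hv⟩ := X_pow_prime_pow_sub_one_dvd_cyclotomic_prime_pow_sub R hp hkr
  rw [Ideal.map_span, Set.image_singleton, ← Ideal.span_insert, ← Ideal.span_insert,
    sub_eq_iff_eq_add'.mp hv, mul_comm, Ideal.span_pair_add_mul_right]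

end CyclotomicPrimePow

section AevalSingle

open Polynomial

variable {R S M : Type*} [Monoid M] {c : M}

theorem aeval_single_surjective [CommSemiring R] [Semiring S] [Algebra R S]
    (hRS : Function.Surjective (algebraMap R S)) (hc : Submonoid.powers c = ⊤) :
    Function.Surjective (aeval (R := R) (MonoidAlgebra.single c (1 : S))) := by
  intro a
  induction a using MonoidAlgebra.induction_on with
  | of m =>
    obtain ⟨i, rfl⟩ : m ∈ Submonoid.powers c := hc ▸ Submonoid.mem_top m
    exact ⟨X ^ i, by simp [MonoidAlgebra.single_pow]⟩
  | add a b ha hb =>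
    obtain ⟨f, rfl⟩ := ha
    obtain ⟨g, rfl⟩ := hb
    exact ⟨f + g, map_add _ f g⟩
  | smul s a ha =>
    obtain ⟨f, rfl⟩ := ha
    obtain ⟨t, rfl⟩ := hRS s
    exact ⟨t • f, by rw [map_smul, algebraMap_smul]⟩

theorem coeff_aeval_single_pow [CommSemiring S] {f : S[X]} (hf : f.natDegree < orderOf c)
    {k : ℕ} (hk : k < orderOf c) :
    (aeval (MonoidAlgebra.single c (1 : S)) f).coeff (c ^ k) = f.coeff k := by
  have coeff_term (i : ℕ) (hi : i ∈ Finset.range (orderOf c)) (hik : i ≠ k) :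
      (f.coeff i • MonoidAlgebra.single c (1 : S) ^ i).coeff (c ^ k) = 0 := by
    have pow_ne : c ^ i ≠ c ^ k :=
      fun h ↦ hik (pow_injOn_Iio_orderOf (Finset.mem_range.mp hi) hk h)
    simp [MonoidAlgebra.single_pow, pow_ne]
  rw [aeval_eq_sum_range' hf, MonoidAlgebra.coeff_sum, Finsupp.finsetSum_apply,
    Finset.sum_eq_single_of_mem k (Finset.mem_range.mpr hk) coeff_term]
  simp [MonoidAlgebra.single_pow]

variable [CommRing R] [CommRing S] [Algebra R S]

theorem ker_aeval_single (hc : IsOfFinOrder c) :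
    RingHom.ker (aeval (R := S) (MonoidAlgebra.single c (1 : S))) =
      Ideal.span {X ^ orderOf c - 1} := by
  nontriviality S
  have hmonic : (X ^ orderOf c - 1 : S[X]).Monic := by
    simpa using monic_X_pow_sub_C (1 : S) hc.orderOf_pos.ne'
  have hdegree : (X ^ orderOf c - 1 : S[X]).natDegree = orderOf c := by
    simpa using natDegree_X_pow_sub_C (n := orderOf c) (r := (1 : S))
  have hne_one : (X ^ orderOf c - 1 : S[X]) ≠ 1 :=
    ne_of_apply_ne natDegree (by simpa [hdegree] using hc.orderOf_pos.ne')
  have hroot : aeval (MonoidAlgebra.single c (1 : S)) (X ^ orderOf c - 1 : S[X]) = 0 := by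
    simp [MonoidAlgebra.single_pow, pow_orderOf_eq_one, MonoidAlgebra.one_def]
  refine le_antisymm (fun f hf ↦ ?_) ((Ideal.span_singleton_le_iff_mem _).mpr hroot)
  rw [Ideal.mem_span_singleton, ← modByMonic_eq_zero_iff_dvd hmonic]
  have hlt : (f %ₘ (X ^ orderOf c - 1)).natDegree < orderOf c :=
    (natDegree_modByMonic_lt f hmonic hne_one).trans_eq hdegree
  have haeval : aeval (MonoidAlgebra.single c (1 : S)) (f %ₘ (X ^ orderOf c - 1)) = 0 := by
    rw [aeval_modByMonic_eq_self_of_root hroot, RingHom.mem_ker.mp hf]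
  ext k
  rcases lt_or_ge k (orderOf c) with hk | hk
  · rw [← coeff_aeval_single_pow hlt hk, haeval]
    simp
  · exact coeff_eq_zero_of_natDegree_lt (hlt.trans_le hk)

theorem ker_aeval_single_of_surjective (hRS : Function.Surjective (algebraMap R S))
    (hc : IsOfFinOrder c) :
    RingHom.ker (aeval (R := R) (MonoidAlgebra.single c (1 : S))) =
      (RingHom.ker (algebraMap R S)).map C ⊔ Ideal.span {X ^ orderOf c - 1} := by
  have hker : RingHom.ker (aeval (R := R) (MonoidAlgebra.single c (1 : S))) =
      (RingHom.ker (aeval (R := S) (MonoidAlgebra.single c (1 : S)))).comap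
        (mapRingHom (algebraMap R S)) := by
    ext f
    simp [RingHom.mem_ker]
  have hspan : (Ideal.span {X ^ orderOf c - 1} : Ideal S[X]) =
      (Ideal.span {X ^ orderOf c - 1}).map (mapRingHom (algebraMap R S)) := by
    simp [Ideal.map_span]
  rw [hker, ker_aeval_single hc, hspan,
    Ideal.comap_map_of_surjective' _ (map_surjective _ hRS), ker_mapRingHom, sup_comm]

end AevalSingle

theorem statement9_general {R S G : Type*} [CommRing R] [CommRing S] [Algebra R S] [Group G]
    {p k r : ℕ} (hp : p.Prime) (hkr : k < r) (hRS : Function.Surjective (algebraMap R S))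
    (hker : RingHom.ker (algebraMap R S) = Ideal.span {(p : R)}) (hG : Nat.card G = p ^ k)
    {c : G} (hc : Subgroup.zpowers c = ⊤) :
    ∃ φ :
      ((Polynomial R ⧸ Ideal.span {Polynomial.cyclotomic (p ^ r) R}) ⧸
        Ideal.span {(Ideal.Quotient.mk (Ideal.span {Polynomial.cyclotomic (p ^ r) R})
            (Polynomial.X : Polynomial R)) ^ (p ^ k) - 1}) ≃ₐ[R]
      MonoidAlgebra S G,
    φ (Ideal.Quotient.mk _ (Ideal.Quotient.mk _ (Polynomial.X : Polynomial R))) =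
      MonoidAlgebra.single c (1 : S) := by
  have horder : orderOf c = p ^ k := (orderOf_eq_card_of_zpowers_eq_top hc).trans hG
  have hfin : IsOfFinOrder c := orderOf_pos_iff.mp (horder ▸ pow_pos hp.pos k)
  have hpowers : Submonoid.powers c = ⊤ :=
    SetLike.coe_injective (hfin.powers_eq_zpowers.trans (congrArg _ hc))
  have hspan : Ideal.span {Ideal.Quotient.mk (Ideal.span {Polynomial.cyclotomic (p ^ r) R})
      Polynomial.X ^ p ^ k - 1} = (Ideal.span {Polynomial.X ^ p ^ k - 1}).map
        (Ideal.Quotient.mkₐ R (Ideal.span {Polynomial.cyclotomic (p ^ r) R})) := by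
    simp [Ideal.map_span]
  have hsup := ker_aeval_single_of_surjective hRS hfin
  rw [hker, horder, ← span_cyclotomic_prime_pow_sup_span_X_pow_sub_one R hp hkr] at hsup
  refine ⟨(Ideal.quotientEquivAlgOfEq R hspan).trans <|
    (DoubleQuot.quotQuotEquivQuotSupₐ R _ _).trans <|
    (Ideal.quotientEquivAlgOfEq R hsup.symm).trans <|
    Ideal.quotientKerAlgEquivOfSurjective (aeval_single_surjective hRS hpowers), ?_⟩
  exact Polynomial.aeval_X _

/-- Let `p` be a prime, `r ≥ 1`, `1 ≤ j ≤ r`.  Let `R = ℤ[X]/(Φ_{p^r})` be the ring of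
cyclotomic integers `ℤ[ζ_{p^r}]`, with `x` the class of `X`, and let `B = R/(x^{p^{r−j}} − 1)R`.
Let `C` be a cyclic group of order `p^{r−j}` with generator `c`.  Then `B` is isomorphic, as a
module over `ℤ[C]` where `c` acts as multiplication by the class of `x`, to the group algebra
`(ℤ/p)[C]` with `C` acting by left translation: there is an additive isomorphism `φ` with
`φ(x̄·y) = c•φ(y)` for all `y`. -/
theorem statement9 (p r j : ℕ) (hp : p.Prime) (hr : 1 ≤ r) (hj1 : 1 ≤ j) (hjr : j ≤ r)
    (C : Type*) [Group C] [IsCyclic C] (hC : Nat.card C = p ^ (r - j))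
    (c : C) (hc : Subgroup.zpowers c = ⊤) :
    ∃ φ :
      ((Polynomial ℤ ⧸ Ideal.span {Polynomial.cyclotomic (p ^ r) ℤ}) ⧸
        Ideal.span {(Ideal.Quotient.mk (Ideal.span {Polynomial.cyclotomic (p ^ r) ℤ})
            (Polynomial.X : Polynomial ℤ)) ^ (p ^ (r - j)) - 1}) ≃+
      MonoidAlgebra (ZMod p) C,
    ∀ y, φ ((Ideal.Quotient.mk _ (Ideal.Quotient.mk _ (Polynomial.X : Polynomial ℤ))) * y) =
      MonoidAlgebra.single c (1 : ZMod p) * φ y := by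
  obtain ⟨φ, hφ⟩ := statement9_general hp (Nat.sub_lt hr hj1)
    (ZMod.intCast_surjective (n := p)) (CharP.ker_intAlgebraMap_eq_span p) hC hc
  exact ⟨φ.toAddEquiv, fun y ↦ (map_mul φ _ y).trans (congrArg (· * φ y) hφ)⟩
end

section
/- Let p be a prime and r, k ≥ 1. Let H be a cyclic group of order p^r and let S be a finite set with p^k elements. Let H act on the set of all functions f : H → S by translation of the domain, (h·f)(x) = f(h⁻¹x). Then the number of H-orbits of this action equals p^k + Σ_{i=0}^{r−1} ( p^{k·p^{r−i} − r + i} − p^{k·p^{r−i−1} − r + i} ). -/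
/-!
By Burnside's lemma, `|H|` times the number of orbits is the sum over `h : H` of the number of
functions fixed by `h`, i.e. constant on the `⟨h⟩`-orbits; since `⟨h⟩` acts freely on `H`, there are
`|S| ^ (|H| / orderOf h)` of them. In a cyclic group of order `p ^ r` there are `φ (p ^ j)` elements
of order `p ^ j`, and writing `φ (p ^ j) = p ^ j - p ^ (j - 1)` for `j ≥ 1` and summing by parts
turns `∑ j ≤ r, φ (p ^ j) * |S| ^ p ^ (r - j)` into the stated sum of differences.
-/

open MulAction Subgroup

section Arithmetic

theorem sum_totient_prime_pow_mul {p : ℕ} (hp : p.Prime) {B : ℕ → ℕ} (hB : Antitone B) (n : ℕ) :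
    ∑ j ∈ Finset.range (n + 1), (p ^ j).totient * B j =
      p ^ n * B n + ∑ i ∈ Finset.range n, p ^ i * (B i - B (i + 1)) := by
  induction n with
  | zero => simp
  | succ n ih =>
    obtain ⟨c, hc⟩ := Nat.exists_eq_add_of_le (hB n.le_succ)
    obtain ⟨q, rfl⟩ := Nat.exists_eq_add_of_le' hp.one_le
    rw [Finset.sum_range_succ, ih, Finset.sum_range_succ, Nat.totient_prime_pow_succ hp, hc,
      Nat.add_sub_cancel_left, Nat.add_sub_cancel]
    ring

theorem antitone_pow_pow_sub {a : ℕ} (ha : a ≠ 0) (q r : ℕ) :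
    Antitone fun j ↦ q ^ a ^ (r - j) := by
  intro i j hij
  obtain ⟨c, hc⟩ := Nat.exists_eq_add_of_le (Nat.sub_le_sub_left hij r)
  simp only [hc, pow_add, pow_mul]
  exact Nat.le_self_pow (pow_ne_zero c ha) _

theorem pow_mul_pow_sub_pow (a : ℕ) {i m n r : ℕ} (hm : r ≤ m + i) (hn : r ≤ n + i) :
    a ^ i * (a ^ m - a ^ n) = (a ^ (m + i - r) - a ^ (n + i - r)) * a ^ r := by
  rw [Nat.sub_mul, Nat.mul_sub, pow_sub_mul_pow a hm, pow_sub_mul_pow a hn, pow_add, pow_add,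
    mul_comm (a ^ i), mul_comm (a ^ i)]

end Arithmetic

section Group

variable {G : Type*} [Group G]

theorem card_orbitRel_quotient_zpowers [Finite G] (g : G) :
    Nat.card (orbitRel.Quotient (zpowers g) G) = Nat.card G / orderOf g := by
  rw [← (zpowers g).index_mul_card, Nat.card_zpowers, Nat.mul_div_cancel _ (orderOf_pos g)]
  exact Nat.card_congr (QuotientGroup.quotientRightRelEquivQuotientLeftRel (zpowers g))

theorem sum_comp_orderOf_of_isCyclic [IsCyclic G] [Fintype G] {M : Type*} [AddCommMonoid M]
    (F : ℕ → M) :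
    ∑ g : G, F (orderOf g) = ∑ d ∈ (Nat.card G).divisors, d.totient • F d := by
  classical
  have orderOf_mem : ∀ g ∈ Finset.univ, orderOf (g : G) ∈ (Nat.card G).divisors := fun g _ ↦
    Nat.mem_divisors.2 ⟨orderOf_dvd_natCard g, Nat.card_pos.ne'⟩
  rw [← Finset.sum_fiberwise_of_maps_to' orderOf_mem]
  refine Finset.sum_congr rfl fun d hd ↦ ?_
  have hd' : d ∣ Fintype.card G := Nat.card_eq_fintype_card (α := G) ▸ Nat.dvd_of_mem_divisors hd
  rw [Finset.sum_const, IsCyclic.card_orderOf_eq_totient hd']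

end Group

section Arrow

attribute [local instance] arrowAction

variable {G X S : Type*} [Group G] [MulAction G X]

theorem mem_fixedBy_arrow_iff {g : G} {f : X → S} :
    f ∈ fixedBy (X → S) g ↔ orbitRel (zpowers g) X ≤ Setoid.ker f := by
  constructor
  · rintro hf _ x ⟨⟨_, n, rfl⟩, rfl⟩
    have f_apply : f ((g ^ (-n))⁻¹ • x) = f x := congrFun (mem_fixedBy_zpow hf (-n)) x
    rwa [zpow_neg, inv_inv] at f_apply
  · intro hf
    funext x
    exact hf ⟨⟨g, mem_zpowers g⟩⁻¹, rfl⟩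

theorem card_fixedBy_arrow [Finite X] (g : G) :
    Nat.card (fixedBy (X → S) g) = Nat.card S ^ Nat.card (orbitRel.Quotient (zpowers g) X) := by
  rw [← Nat.card_fun]
  exact Nat.card_congr <| (Equiv.subtypeEquivRight fun _ ↦ mem_fixedBy_arrow_iff).trans
    (Setoid.liftEquiv _)

variable (G X S) in
theorem sum_pow_card_orbits_zpowers [Fintype G] [Finite X] [Finite S] :
    ∑ g : G, Nat.card S ^ Nat.card (orbitRel.Quotient (zpowers g) X) =
      Nat.card (orbitRel.Quotient G (X → S)) * Nat.card G := by
  classical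
  have := Fintype.ofFinite (orbitRel.Quotient G (X → S))
  have := fun g : G ↦ Fintype.ofFinite (fixedBy (X → S) g)
  simp only [← card_fixedBy_arrow, Nat.card_eq_fintype_card]
  exact sum_card_fixedBy_eq_card_orbits_mul_card_group G (X → S)

theorem card_quot_arrow :
    Nat.card (Quot fun f f' : X → S ↦ ∃ g : G, ∀ x, f (g⁻¹ • x) = f' x) =
      Nat.card (orbitRel.Quotient G (X → S)) := by
  refine Nat.card_congr (Quot.congrRight fun f f' ↦ ?_)
  change _ ↔ f ∈ orbit G f'
  rw [mem_orbit_symm]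
  exact exists_congr fun _ ↦ funext_iff.symm

variable (G S) in
theorem card_orbits_arrow_mul_card_of_isCyclic [IsCyclic G] [Finite G] [Finite S] :
    Nat.card (orbitRel.Quotient G (G → S)) * Nat.card G =
      ∑ d ∈ (Nat.card G).divisors, d.totient * Nat.card S ^ (Nat.card G / d) := by
  have := Fintype.ofFinite G
  simp only [← sum_pow_card_orbits_zpowers G G S, card_orbitRel_quotient_zpowers, ← smul_eq_mul]
  exact sum_comp_orderOf_of_isCyclic fun d ↦ Nat.card S ^ (Nat.card G / d)

variable (S) in
theorem card_orbits_arrow_mul_prime_pow [IsCyclic G] [Finite S] {p r : ℕ} (hp : p.Prime)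
    (hG : Nat.card G = p ^ r) :
    Nat.card (orbitRel.Quotient G (G → S)) * p ^ r =
      p ^ r * Nat.card S + ∑ i ∈ Finset.range r,
        p ^ i * (Nat.card S ^ p ^ (r - i) - Nat.card S ^ p ^ (r - i - 1)) := by
  have : Finite G := Nat.finite_of_card_ne_zero (hG ▸ pow_ne_zero r hp.ne_zero)
  calc
    _ = ∑ j ∈ Finset.range (r + 1), (p ^ j).totient * Nat.card S ^ (p ^ r / p ^ j) := by
      rw [← hG, card_orbits_arrow_mul_card_of_isCyclic, hG, Nat.sum_divisors_prime_pow hp]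
    _ = ∑ j ∈ Finset.range (r + 1), (p ^ j).totient * Nat.card S ^ p ^ (r - j) :=
      Finset.sum_congr rfl fun j hj ↦ by
        rw [Nat.pow_div (Finset.mem_range_succ_iff.1 hj) hp.pos]
    _ = _ := by
      simpa [Nat.sub_sub] using
        sum_totient_prime_pow_mul hp (antitone_pow_pow_sub hp.ne_zero (Nat.card S) r) r

end Arrow

/-- Let `p` be a prime, `r, k ≥ 1`, `H` a cyclic group of order `p^r` and `S` a finite set with
`p^k` elements.  Let `H` act on the functions `f : H → S` by translation of the domain,
`(h • f) x = f (h⁻¹ x)`.  Then the number of orbits of this action equals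
`p^k + Σ_{i=0}^{r−1} (p^{k·p^{r−i} − r + i} − p^{k·p^{r−i−1} − r + i})`. -/
theorem statement10 (p r k : ℕ) (hp : p.Prime) (hr : 1 ≤ r) (hk : 1 ≤ k)
    (H : Type*) [Group H] [IsCyclic H] (hH : Nat.card H = p ^ r)
    (S : Type*) (hS : Nat.card S = p ^ k) :
    Nat.card (Quot fun f g : H → S => ∃ h : H, ∀ x : H, f (h⁻¹ * x) = g x) =
      p ^ k + ∑ i ∈ Finset.range r,
        (p ^ (k * p ^ (r - i) + i - r) - p ^ (k * p ^ (r - i - 1) + i - r)) := by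
  have : Finite S := Nat.finite_of_card_ne_zero (hS ▸ pow_ne_zero k hp.ne_zero)
  have lt_exponent : ∀ m, m < k * p ^ m := fun m ↦
    (Nat.lt_pow_self hp.one_lt).trans_le (Nat.le_mul_of_pos_left _ hk)
  apply Nat.eq_of_mul_eq_mul_right (pow_pos hp.pos r)
  calc
    _ = p ^ r * p ^ k + ∑ i ∈ Finset.range r,
          p ^ i * ((p ^ k) ^ p ^ (r - i) - (p ^ k) ^ p ^ (r - i - 1)) := by
      rw [← hS, ← card_orbits_arrow_mul_prime_pow S hp hH, ← card_quot_arrow]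
      rfl
    _ = _ := by
      rw [add_mul, Finset.sum_mul, mul_comm (p ^ k)]
      refine congrArg _ (Finset.sum_congr rfl fun i _ ↦ ?_)
      have := lt_exponent (r - i)
      have := lt_exponent (r - i - 1)
      rw [← pow_mul, ← pow_mul, pow_mul_pow_sub_pow p (r := r) (by omega) (by omega)]
end

section
/- Suppose m = p^r for a prime p and r ≥ 1. Then there is a unique natural number k with n = (p−1)·p^{r−1}·k. For 1 ≤ j ≤ r let G_j denote the unique subgroup of the cyclic group G of order p^j. Then the set ℳ(G_j) is finite and |ℳ(G_j)| = p^{k·p^{r−j} − r + j} − p^{k·p^{r−j−1} − r + j} for 1 ≤ j ≤ r−1, and |ℳ(G_r)| = p^k. -/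
/-- A subgroup `M` of `Γ` is a maximal finite subgroup: it is finite, and every finite
subgroup of `Γ` containing it equals it. -/
def IsMaxFin (Γ : Type*) [Group Γ] (M : Subgroup Γ) : Prop :=
  (M : Set Γ).Finite ∧ ∀ K : Subgroup Γ, (K : Set Γ).Finite → M ≤ K → M = K

/-- The set `𝒞(C)` of `Γ`-conjugacy classes of subgroups `H ⊆ Γ` with `π(H) = C`,
where `π : Γ → Γ/L` is the quotient map. -/
def ConjClassesOver (Γ : Type*) [Group Γ] (L : Subgroup Γ) [L.Normal]
    (C : Subgroup (Γ ⧸ L)) : Type _ :=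
  Quot fun H K : {H : Subgroup Γ // Subgroup.map (QuotientGroup.mk' L) H = C} =>
    SubConj Γ H.1 K.1

/-- The set `ℳ(C) ⊆ 𝒞(C)` of `Γ`-conjugacy classes of maximal finite subgroups `M ⊆ Γ`
with `π(M) = C`. -/
def MaxFinClassesOver (Γ : Type*) [Group Γ] (L : Subgroup Γ) [L.Normal]
    (C : Subgroup (Γ ⧸ L)) : Type _ :=
  Quot fun H K : {H : Subgroup Γ //
      Subgroup.map (QuotientGroup.mk' L) H = C ∧ IsMaxFin Γ H} =>
    SubConj Γ H.1 K.1

/-!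
Call a subgroup of `Γ` a lift of `C ≤ Γ ⧸ L` if the quotient map sends it isomorphically onto `C`.
Since the action is free outside the origin, the normalizer `N` of a nontrivial finite subgroup `H`
meets `L` trivially, hence is finite; as finite subgroups embed into `Γ ⧸ L` and so are commutative,
`N` is the unique maximal finite subgroup containing `H`. So for `|C| = p ^ j` with `j < r`,
a lift of `C` is either maximal finite, or extends in a unique way to a lift of the subgroup `D` of
order `p ^ (j + 1)`.

If `c ∈ Γ` generates `C` modulo `L`, the `L`-conjugacy classes of lifts of `C` form the group
`L ⧸ (1 - c) L`. The cyclotomic polynomial `Φ` of order `p ^ j` annihilates `c` on `L`, so the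
characteristic polynomial of `c` is `Φ ^ (k * p ^ (r - j))`, and evaluating it at `1` shows that
there are `p ^ (k * p ^ (r - j))` classes. Subtracting the same count for `D` yields the number of
`L`-conjugacy classes of maximal finite lifts of `C`. Each `Γ`-conjugacy class consists of
`[Γ ⧸ L : C] = p ^ (r - j)` of them, because `N = H` has image `C`.
-/

section CyclotomicEndomorphism

open Polynomial Module

-- Evaluating the factorisation `f(Y) - f(X) = (Y - X) * q` at `Y = M` exhibits `f • 1` as a
-- multiple of `X • 1 - M`; take determinants.
theorem matrix_charpoly_dvd_pow_card_of_aeval_eq_zero {R ι : Type*} [CommRing R] [Fintype ι]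
    [DecidableEq ι] {M : Matrix ι ι R} {f : R[X]} (hf : aeval M f = 0) :
    M.charpoly ∣ f ^ Fintype.card ι := by
  let N : Matrix ι ι R[X] := M.map C
  have hN : aeval N (f.map C) = 0 := by
    have : aeval N (f.map C) = (C : R →+* R[X]).mapMatrix (aeval M f) := by
      rw [aeval_def, eval₂_map, aeval_def, hom_eval₂]
      congr 1
      ext x i j : 3
      by_cases h : i = j <;> simp [Matrix.algebraMap_matrix_apply, h]
    rw [this, hf, map_zero]
  obtain ⟨q, hq⟩ : (X - C X : R[X][X]) ∣ f.map C - C f := by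
    simpa only [eval_map, eval₂_C_X] using X_sub_C_dvd_sub_C_eval (a := X) (p := f.map C)
  have hfactor : f • (1 : Matrix ι ι R[X]) = M.charmatrix * aeval N q := by
    have := congrArg (aeval N) hq
    rw [map_sub, map_mul, map_sub, hN, aeval_X, aeval_C, aeval_C, zero_sub, neg_eq_iff_eq_neg,
      ← neg_mul, neg_sub] at this
    rwa [← Algebra.algebraMap_eq_smul_one]
  refine ⟨(aeval N q).det, ?_⟩
  rw [Matrix.charpoly, ← Matrix.det_mul, ← hfactor, Matrix.det_smul, Matrix.det_one, mul_one]

theorem charpoly_dvd_pow_finrank_of_aeval_eq_zero {R V : Type*} [CommRing R] [Nontrivial R]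
    [AddCommGroup V] [Module R V] [Module.Free R V] [Module.Finite R V] {T : End R V} {f : R[X]}
    (hf : aeval T f = 0) : T.charpoly ∣ f ^ finrank R V := by
  rw [finrank_eq_card_chooseBasisIndex, LinearMap.charpoly_def]
  apply matrix_charpoly_dvd_pow_card_of_aeval_eq_zero
  have : LinearMap.toMatrix (Free.chooseBasis R V) (Free.chooseBasis R V) T =
    LinearMap.toMatrixAlgEquiv (Free.chooseBasis R V) T := rfl
  rw [this, aeval_algHom_apply, hf, map_zero]

variable {V : Type*} [AddCommGroup V] [Module.Free ℤ V] [Module.Finite ℤ V] {T : End ℤ V}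

theorem exists_charpoly_eq_cyclotomic_pow {m : ℕ} (hm : 0 < m)
    (hT : aeval T (cyclotomic m ℤ) = 0) : ∃ k, T.charpoly = cyclotomic m ℤ ^ k := by
  obtain ⟨k, -, hk⟩ := (dvd_prime_pow (cyclotomic.irreducible hm).prime _).1
    (charpoly_dvd_pow_finrank_of_aeval_eq_zero hT)
  exact ⟨k, eq_of_monic_of_associated T.charpoly_monic ((cyclotomic.monic m ℤ).pow k) hk⟩

theorem card_quotient_range_eq_natAbs_det (hT : Function.Injective T) :
    Nat.card (V ⧸ LinearMap.range T) = (LinearMap.det T).natAbs :=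
  (Submodule.natAbs_det_equiv _ (LinearEquiv.ofInjective T hT)).symm

theorem aeval_cyclotomic_prime_pow_eq_zero {R M : Type*} [CommRing R] [AddCommGroup M] [Module R M]
    {p : ℕ} (hp : p.Prime) {q : ℕ} {T : End R M} (hT : T ^ p ^ (q + 1) = 1)
    (hfix : ∀ v, (T ^ p ^ q) v = v → v = 0) : aeval T (cyclotomic (p ^ (q + 1)) R) = 0 := by
  simp only [cyclotomic_prime_pow_eq_geom_sum hp, map_sum, map_pow, aeval_X]
  have hsum := mul_neg_geom_sum (T ^ p ^ q) p
  rw [← pow_mul, ← pow_succ, hT, sub_self] at hsum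
  ext v
  exact hfix _ (sub_eq_zero.1 (LinearMap.congr_fun hsum v)).symm

theorem exists_finrank_eq_and_card_quotient_eq_prime_pow {p : ℕ} (hp : p.Prime) {q : ℕ}
    (hT : T ^ p ^ (q + 1) = 1) (hfix : ∀ v, (T ^ p ^ q) v = v → v = 0) :
    ∃ k, finrank ℤ V = (p ^ (q + 1)).totient * k ∧
      Nat.card (V ⧸ LinearMap.range (1 - T)) = p ^ k := by
  have := Fact.mk hp
  obtain ⟨k, hk⟩ := exists_charpoly_eq_cyclotomic_pow (pow_pos hp.pos _)
    (aeval_cyclotomic_prime_pow_eq_zero hp hT hfix)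
  have hinj : Function.Injective (1 - T : End ℤ V) := by
    refine (injective_iff_map_eq_zero _).2 fun v hv => hfix v ?_
    have hv : T v = v := (sub_eq_zero.1 hv).symm
    rw [End.pow_apply]
    exact Function.IsFixedPt.iterate hv _
  refine ⟨k, ?_, ?_⟩
  · rw [← T.charpoly_natDegree, hk, natDegree_pow, natDegree_cyclotomic, mul_comm]
  · have hdet : LinearMap.det (1 - T) = (p : ℤ) ^ k := by
      rw [← map_one (algebraMap ℤ (End ℤ V)), ← LinearMap.eval_charpoly, hk, eval_pow,
        eval_one_cyclotomic_prime_pow]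
    rw [card_quotient_range_eq_natAbs_det hinj, hdet, Int.natAbs_pow, Int.natAbs_natCast]

end CyclotomicEndomorphism

section FiniteSubgroups

open scoped commutatorElement

variable {Γ : Type*} [Group Γ] {L : Subgroup Γ}

theorem disjoint_of_finite [IsMulTorsionFree L] {H : Subgroup Γ} (hH : (H : Set Γ).Finite) :
    Disjoint H L := by
  have := hH.to_subtype
  refine Subgroup.disjoint_def.2 fun {x} hxH hxL => ?_
  have hx : IsOfFinOrder x := Submonoid.isOfFinOrder_coe.2 (isOfFinOrder_of_finite (⟨x, hxH⟩ : H))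
  have hx : IsOfFinOrder (⟨x, hxL⟩ : L) := Submonoid.isOfFinOrder_coe.1 hx
  exact congrArg Subtype.val ((isOfFinOrder_iff_eq_one _).1 hx)

/-- Conjugation makes `Γ / L` act on `L` freely outside the origin. The condition is stated for
elements of `Γ`, so it makes sense even when `L` is not commutative. -/
def ConjActsFreely (L : Subgroup Γ) : Prop :=
  ∀ γ : Γ, γ ∉ L → ∀ x : Γ, x ∈ L → x ≠ 1 → γ * x * γ⁻¹ ≠ x

theorem ConjActsFreely.eq_one_of_commute (hfree : ConjActsFreely L) {g x : Γ} (hg : g ∉ L)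
    (hx : x ∈ L) (hgx : Commute g x) : x = 1 :=
  by_contra fun h => hfree g hg x hx h (by rw [hgx.eq, mul_inv_cancel_right])

theorem ConjActsFreely.disjoint_zpowers (hfree : ConjActsFreely L) {g : Γ} (hg : g ∉ L) :
    Disjoint (Subgroup.zpowers g) L := by
  refine Subgroup.disjoint_def.2 fun hx hxL => ?_
  obtain ⟨m, rfl⟩ := hx
  exact hfree.eq_one_of_commute hg hxL ((Commute.refl g).zpow_right m)

variable [L.Normal]

theorem ConjActsFreely.disjoint_normalizer (hfree : ConjActsFreely L) {H : Subgroup Γ}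
    (hH : Disjoint H L) (hbot : H ≠ ⊥) : Disjoint (Subgroup.normalizer (H : Set Γ)) L := by
  obtain ⟨h, hhH, hh⟩ := H.bot_or_exists_ne_one.resolve_left hbot
  refine Subgroup.disjoint_def.2 fun {x} hxN hxL => ?_
  have hcomm : ⁅h, x⁆ ∈ H ⊓ L :=
    ⟨Subgroup.le_normalizer_iff_commutator_le_left.1 le_rfl
      (Subgroup.commutator_mem_commutator hhH hxN),
      Subgroup.commutator_le_right _ _ (Subgroup.commutator_mem_commutator hhH hxL)⟩
  rw [hH.eq_bot, Subgroup.mem_bot, commutatorElement_eq_one_iff_commute] at hcomm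
  exact hfree.eq_one_of_commute (fun hhL => hh (Subgroup.disjoint_def.1 hH hhH hhL)) hxL hcomm

theorem le_normalizer_of_disjoint [IsMulCommutative (Γ ⧸ L)] {H K : Subgroup Γ}
    (hK : Disjoint K L) (hHK : H ≤ K) : K ≤ Subgroup.normalizer (H : Set Γ) := by
  refine Subgroup.le_normalizer_iff_commutator_le_left.2 (le_trans ?_ bot_le)
  refine le_trans (Subgroup.commutator_mono hHK le_rfl) (le_trans (le_inf ?_ ?_) hK.eq_bot.le)
  · exact Subgroup.commutator_le_self K
  · refine Subgroup.commutator_le.2 fun x _ y _ => (QuotientGroup.eq_one_iff _).1 ?_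
    exact commutatorElement_eq_one_iff_mul_comm.2 (mul_comm' (x : Γ ⧸ L) y)

theorem mk'_mul_of_mem {l : Γ} (hl : l ∈ L) (γ : Γ) :
    QuotientGroup.mk' L (l * γ) = (γ : Γ ⧸ L) := by
  have hl : QuotientGroup.mk' L l = 1 := (QuotientGroup.eq_one_iff l).2 hl
  rw [map_mul, hl, one_mul, QuotientGroup.mk'_apply]

theorem injOn_mk'_of_disjoint {H : Subgroup Γ} (hH : Disjoint H L) :
    Set.InjOn (QuotientGroup.mk' L) H := by
  refine (Set.injOn_iff_map_eq_one _ _).2 fun x hx hx' => ?_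
  exact Subgroup.disjoint_def.1 hH hx ((QuotientGroup.eq_one_iff x).1 hx')

theorem finite_of_disjoint [Finite (Γ ⧸ L)] {H : Subgroup Γ} (hH : Disjoint H L) :
    (H : Set Γ).Finite :=
  .of_finite_image (Set.toFinite _) (injOn_mk'_of_disjoint hH)

theorem eq_of_map_mk'_eq {H K M : Subgroup Γ} (hM : Disjoint M L) (hH : H ≤ M) (hK : K ≤ M)
    (hmap : H.map (QuotientGroup.mk' L) = K.map (QuotientGroup.mk' L)) : H = K :=
  SetLike.coe_injective <|
    ((injOn_mk'_of_disjoint hM).image_eq_image_iff hH hK).1 (congrArg SetLike.coe hmap)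

-- `N(H)` is itself finite, and every finite group containing `H` is commutative, hence in `N(H)`.
theorem ConjActsFreely.isMaxFin_iff [IsMulTorsionFree L] [IsMulCommutative (Γ ⧸ L)]
    [Finite (Γ ⧸ L)] (hfree : ConjActsFreely L) {H : Subgroup Γ} (hH : Disjoint H L)
    (hbot : H ≠ ⊥) : IsMaxFin Γ H ↔ Subgroup.normalizer (H : Set Γ) = H := by
  constructor
  · exact fun h => (h.2 _ (finite_of_disjoint (hfree.disjoint_normalizer hH hbot))
      Subgroup.le_normalizer).symm
  · refine fun h => ⟨finite_of_disjoint hH, fun K hK hHK => hHK.antisymm ?_⟩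
    exact h ▸ le_normalizer_of_disjoint (disjoint_of_finite (L := L) hK) hHK

end FiniteSubgroups

section OrbitCounting

open MulAction

variable {G : Type*} [Group G]

theorem orbitRel_smul_smul_iff {X : Type*} [MulAction G X] {N : Subgroup G} [N.Normal]
    {g h : G} {x : X} :
    orbitRel N X (g • x) (h • x) ↔ g⁻¹ * h ∈ N ⊔ stabilizer G x := by
  simp only [orbitRel_apply, mem_orbit_iff, Subgroup.mem_sup_of_normal_left, mem_stabilizer_iff,
    Subgroup.smul_def, Subtype.exists, exists_prop]
  constructor
  · rintro ⟨n, hn, hnx⟩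
    refine ⟨g⁻¹ * n⁻¹ * g, by simpa using ‹N.Normal›.conj_mem _ (N.inv_mem hn) g⁻¹,
      g⁻¹ * n * h, ?_, by group⟩
    rw [mul_smul, mul_smul, hnx, inv_smul_smul]
  · rintro ⟨n, hn, s, hs, hns⟩
    refine ⟨g * n⁻¹ * g⁻¹, ‹N.Normal›.conj_mem _ (N.inv_mem hn) g, ?_⟩
    have hmul : g * n⁻¹ * g⁻¹ * h = g * s := by
      rw [← mul_inv_cancel_left g h, ← hns]
      group
    rw [smul_smul, hmul, mul_smul, hs]

/-- If `N ⊴ G` and `N ⊔ stabilizer G x` is the same subgroup `M` for all `x`, then the `N`-orbits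
in the `G`-orbit of `x` are indexed by `G ⧸ M`, by sending `gM` to the `N`-orbit of `g • x`. -/
noncomputable def orbitQuotientProdEquiv (X : Type*) [MulAction G X] (N M : Subgroup G) [N.Normal]
    (hM : ∀ x : X, N ⊔ stabilizer G x = M) :
    orbitRel.Quotient G X × G ⧸ M ≃ orbitRel.Quotient N X :=
  have hrel (x : X) (g h : G) : orbitRel N X (g • x) (h • x) ↔ (g : G ⧸ M) = h := by
    rw [orbitRel_smul_smul_iff, hM, QuotientGroup.eq]
  have hmk (ω : orbitRel.Quotient G X) (g : G) : Quotient.mk'' (g • ω.out) = ω :=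
    (Quotient.sound (mem_orbit ω.out g)).trans ω.out_eq
  .ofBijective (fun a => a.2.liftOn' (fun g => Quotient.mk'' (g • a.1.out)) fun g h hgh =>
    Quotient.sound ((hrel _ g h).2 (Quotient.sound hgh))) <| by
    constructor
    · rintro ⟨ω, g⟩ ⟨ω', g'⟩ hq
      induction g using QuotientGroup.induction_on with | _ g
      induction g' using QuotientGroup.induction_on with | _ g'
      have hN : orbitRel N X (g • ω.out) (g' • ω'.out) := Quotient.exact hq
      obtain rfl : ω = ω' := by
        rw [← hmk ω g, ← hmk ω' g']
        exact Quotient.sound (orbitRel_subgroup_le N hN)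
      rw [(hrel _ g g').1 hN]
    · intro q
      induction q using Quotient.inductionOn' with | _ x
      obtain ⟨g, hg⟩ : x ∈ orbit G (Quotient.mk'' x : orbitRel.Quotient G X).out :=
        Setoid.symm' _ (Quotient.mk_out (s := orbitRel G X) x)
      exact ⟨(Quotient.mk'' x, g), congrArg _ hg⟩

theorem finite_orbitRel_quotient_of_sup_stabilizer_eq {X : Type*} [MulAction G X]
    {N M : Subgroup G} [N.Normal] (hM : ∀ x : X, N ⊔ stabilizer G x = M)
    [Finite (orbitRel.Quotient N X)] : Finite (orbitRel.Quotient G X) :=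
  have := Finite.of_equiv _ (orbitQuotientProdEquiv X N M hM).symm
  Finite.prod_left (G ⧸ M)

theorem card_orbitRel_quotient_mul_index {X : Type*} [MulAction G X]
    {N M : Subgroup G} [N.Normal] (hM : ∀ x : X, N ⊔ stabilizer G x = M) :
    Nat.card (orbitRel.Quotient G X) * M.index = Nat.card (orbitRel.Quotient N X) := by
  rw [Subgroup.index, ← Nat.card_prod, Nat.card_congr (orbitQuotientProdEquiv X N M hM)]

variable {X Y Z : Type*} [MulAction G X] [MulAction G Y] [MulAction G Z]

/-- The map induced on orbits by an equivariant map. -/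
def orbitMap (f : X →[G] Z) : orbitRel.Quotient G X → orbitRel.Quotient G Z :=
  Quotient.map' f fun _ y ⟨a, ha⟩ => ⟨a, ha ▸ (map_smul f a y).symm⟩

theorem orbitMap_injective {f : X →[G] Z} (hf : Function.Injective f) :
    Function.Injective (orbitMap f) := by
  intro ω ω' h
  induction ω using Quotient.inductionOn' with | _ x
  induction ω' using Quotient.inductionOn' with | _ y
  obtain ⟨a, ha⟩ : orbitRel G Z (f x) (f y) := Quotient.exact h
  exact Quotient.sound ⟨a, hf ((map_smul f a y).trans ha)⟩

theorem orbitMap_ne_orbitMap {f : X →[G] Z} {g : Y →[G] Z}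
    (hfg : Disjoint (Set.range f) (Set.range g)) (ω : orbitRel.Quotient G X)
    (ω' : orbitRel.Quotient G Y) : orbitMap f ω ≠ orbitMap g ω' := by
  intro h
  induction ω using Quotient.inductionOn' with | _ x
  induction ω' using Quotient.inductionOn' with | _ y
  obtain ⟨a, ha⟩ : orbitRel G Z (f x) (g y) := Quotient.exact h
  exact Set.disjoint_left.1 hfg ⟨x, rfl⟩ ⟨a • y, (map_smul g a y).trans ha⟩

theorem card_orbitRel_quotient_eq_add {f : X →[G] Z} {g : Y →[G] Z} (hf : Function.Injective f)
    (hg : Function.Injective g) (hfg : IsCompl (Set.range f) (Set.range g))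
    [Finite (orbitRel.Quotient G Z)] :
    Nat.card (orbitRel.Quotient G Z) =
      Nat.card (orbitRel.Quotient G X) + Nat.card (orbitRel.Quotient G Y) := by
  have := Finite.of_injective _ (orbitMap_injective hf)
  have := Finite.of_injective _ (orbitMap_injective hg)
  rw [← Nat.card_sum]
  refine (Nat.card_congr (.ofBijective (Sum.elim (orbitMap f) (orbitMap g)) ⟨?_, fun ω => ?_⟩)).symm
  · exact (orbitMap_injective hf).sumElim (orbitMap_injective hg)
      (orbitMap_ne_orbitMap hfg.disjoint)
  · induction ω using Quotient.inductionOn' with | _ z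
    obtain ⟨x, rfl⟩ | ⟨y, rfl⟩ : z ∈ Set.range f ∪ Set.range g :=
      hfg.sup_eq_top.ge (Set.mem_univ z)
    · exact ⟨.inl (Quotient.mk'' x), rfl⟩
    · exact ⟨.inr (Quotient.mk'' y), rfl⟩

end OrbitCounting

section ConjugationOfSubgroups

open MulAction
open scoped Pointwise

variable {Γ : Type*} [Group Γ]

/-- The action of a group on its subgroups by conjugation. -/
abbrev conjSubgroupAction (Γ : Type*) [Group Γ] : MulAction Γ (Subgroup Γ) :=
  .compHom _ (MulAut.conj : Γ →* MulAut Γ)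

attribute [local instance] conjSubgroupAction

theorem conj_smul_def (γ : Γ) (H : Subgroup Γ) : γ • H = MulAut.conj γ • H :=
  rfl

theorem stabilizer_eq_normalizer (H : Subgroup Γ) :
    stabilizer Γ H = Subgroup.normalizer (H : Set Γ) :=
  Subgroup.ext fun _ => Subgroup.mem_normalizer_iff_map_conj_eq.symm

theorem IsMaxFin.conj_smul {H : Subgroup Γ} (hH : IsMaxFin Γ H) (γ : Γ) : IsMaxFin Γ (γ • H) := by
  have finite_smul {K : Subgroup Γ} (hK : (K : Set Γ).Finite) (δ : Γ) :
      ((δ • K : Subgroup Γ) : Set Γ).Finite := hK.image _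
  refine ⟨finite_smul hH.1 γ, fun K hK hHK => ?_⟩
  rw [← inv_smul_eq_iff.1 (hH.2 (γ⁻¹ • K) (finite_smul hK γ⁻¹) ?_).symm]
  rwa [conj_smul_def, map_inv, ← Subgroup.pointwise_smul_subset_iff]

theorem map_conj_smul {Δ : Type*} [Group Δ] (f : Γ →* Δ) (γ : Γ) (H : Subgroup Γ) :
    (γ • H).map f = f γ • H.map f := by
  have hf : f.comp (MulAut.conj γ).toMonoidHom = (MulAut.conj (f γ)).toMonoidHom.comp f := by
    ext x
    simp
  exact (Subgroup.map_map ..).trans ((congrArg H.map hf).trans (Subgroup.map_map ..).symm)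

section Lifts

variable (L : Subgroup Γ) [L.Normal] [IsMulCommutative (Γ ⧸ L)] (C : Subgroup (Γ ⧸ L))

/-- The subgroups of `Γ` that the quotient map `Γ → Γ ⧸ L` sends isomorphically onto `C`. -/
def subgroupLifts : SubMulAction Γ (Subgroup Γ) where
  carrier := {H | H.map (QuotientGroup.mk' L) = C ∧ Disjoint H L}
  smul_mem' γ H hH := ⟨by
    rw [map_conj_smul, hH.1, conj_smul_def, Subgroup.Normal.conj_smul_eq_self], by
    rw [disjoint_iff, ← Subgroup.Normal.conj_smul_eq_self γ L, conj_smul_def, ← Subgroup.smul_inf,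
      hH.2.eq_bot, Subgroup.smul_bot]⟩

/-- The maximal finite subgroups of `Γ` with image `C` under the quotient map `Γ → Γ ⧸ L`. -/
def maxFinSubgroupsOver : SubMulAction Γ (Subgroup Γ) where
  carrier := {H | H.map (QuotientGroup.mk' L) = C ∧ IsMaxFin Γ H}
  smul_mem' γ _ hH := ⟨by
    rw [map_conj_smul, hH.1, conj_smul_def, Subgroup.Normal.conj_smul_eq_self], hH.2.conj_smul γ⟩

/-- The set `ℳ(C)` as the set of `Γ`-orbits of maximal finite subgroups over `C`. -/
def maxFinClassesOverEquiv :
    MaxFinClassesOver Γ L C ≃ orbitRel.Quotient Γ (maxFinSubgroupsOver L C) :=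
  Quot.congr (.refl _) fun H K => by
    rw [Setoid.comm']
    exact exists_congr fun γ =>
      ⟨fun h => Subtype.ext h.symm, fun h => (congrArg Subtype.val h).symm⟩

variable {L C} {D : Subgroup (Γ ⧸ L)}

theorem ne_bot_of_mem_subgroupLifts (hC : C ≠ ⊥) {H : Subgroup Γ} (hH : H ∈ subgroupLifts L C) :
    H ≠ ⊥ := by
  rintro rfl
  exact hC (hH.1.symm.trans (Subgroup.map_bot _))

theorem zpowers_mem_subgroupLifts (hfree : ConjActsFreely L) {l c : Γ} (hl : l ∈ L) (hc : c ∉ L) :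
    Subgroup.zpowers (l * c) ∈ subgroupLifts L (Subgroup.zpowers (c : Γ ⧸ L)) := by
  refine ⟨?_, hfree.disjoint_zpowers fun h => hc ((L.mul_mem_cancel_left hl).1 h)⟩
  rw [MonoidHom.map_zpowers, mk'_mul_of_mem hl]

theorem inf_comap_mem_subgroupLifts (hDC : D ≤ C)
    {H : Subgroup Γ} (hH : H ∈ subgroupLifts L C) :
    H ⊓ D.comap (QuotientGroup.mk' L) ∈ subgroupLifts L D := by
  refine ⟨le_antisymm ?_ fun d hd => ?_, hH.2.mono_left inf_le_left⟩
  · exact Subgroup.map_le_iff_le_comap.2 inf_le_right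
  · obtain ⟨h, hh, rfl⟩ := hH.1.ge (hDC hd)
    exact Subgroup.mem_map_of_mem _ ⟨hh, hd⟩

/-- Over a subgroup `D ≤ C`, every lift of `C` contains a unique lift of `D`. The map is only
needed to respect the action of `L`. -/
def restrictLift (hDC : D ≤ C) :
    subgroupLifts L C →[L] subgroupLifts L D where
  toFun H := ⟨_, inf_comap_mem_subgroupLifts hDC H.2⟩
  map_smul' l H := Subtype.ext <| by
    have hD := Subgroup.Normal.conj_smul_eq_self (l : Γ) (D.comap (QuotientGroup.mk' L))
    have hinf := Subgroup.smul_inf (MulAut.conj (l : Γ)) H (D.comap (QuotientGroup.mk' L))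
    rw [hD] at hinf
    exact hinf.symm

theorem restrictLift_injective (hfree : ConjActsFreely L) (hD : D ≠ ⊥)
    (hDC : D ≤ C) : Function.Injective (restrictLift hDC) := by
  intro H K hHK
  have hlift := (restrictLift hDC H).2
  refine Subtype.ext <| eq_of_map_mk'_eq
    (hfree.disjoint_normalizer hlift.2 (ne_bot_of_mem_subgroupLifts hD hlift))
    (le_normalizer_of_disjoint H.2.2 inf_le_left) ?_ (H.2.1.trans K.2.1.symm)
  rw [hHK]
  exact le_normalizer_of_disjoint K.2.2 inf_le_left

theorem map_normalizer_eq_iff (hfree : ConjActsFreely L) (hC : C ≠ ⊥) {H : Subgroup Γ}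
    (hH : H ∈ subgroupLifts L C) :
    (Subgroup.normalizer (H : Set Γ)).map (QuotientGroup.mk' L) = C ↔
      Subgroup.normalizer (H : Set Γ) = H := by
  refine ⟨fun h => ?_, fun h => h.symm ▸ hH.1⟩
  exact eq_of_map_mk'_eq (hfree.disjoint_normalizer hH.2 (ne_bot_of_mem_subgroupLifts hC hH)) le_rfl
    Subgroup.le_normalizer (h.trans hH.1.symm)

theorem exists_restrictLift_eq_iff (hfree : ConjActsFreely L) (hC : C ≠ ⊥)
    (hD : ∀ E, C < E ↔ D ≤ E) (hCD : C ≤ D) (H : subgroupLifts L C) :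
    (∃ K, restrictLift hCD K = H) ↔ Subgroup.normalizer ((H : Subgroup Γ) : Set Γ) ≠ H := by
  let N := Subgroup.normalizer ((H : Subgroup Γ) : Set Γ)
  have hN : Disjoint N L :=
    hfree.disjoint_normalizer H.2.2 (ne_bot_of_mem_subgroupLifts hC H.2)
  have hCN : C ≤ N.map (QuotientGroup.mk' L) :=
    H.2.1.ge.trans (Subgroup.map_mono Subgroup.le_normalizer)
  rw [Ne, ← map_normalizer_eq_iff hfree hC H.2, eq_comm, ← Ne, ← hCN.lt_iff_ne, hD]
  constructor
  · rintro ⟨K, rfl⟩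
    exact K.2.1.ge.trans (Subgroup.map_mono (le_normalizer_of_disjoint K.2.2 inf_le_left))
  · intro hDN
    have hN_lift : N ∈ subgroupLifts L (N.map (QuotientGroup.mk' L)) := ⟨rfl, hN⟩
    let K : subgroupLifts L D := ⟨_, inf_comap_mem_subgroupLifts hDN hN_lift⟩
    exact ⟨K, Subtype.ext <| eq_of_map_mk'_eq hN (inf_le_left.trans inf_le_left)
      Subgroup.le_normalizer ((restrictLift hCD K).2.1.trans H.2.1.symm)⟩

section MaximalFinite

variable [IsMulTorsionFree L]

/-- The inclusion of the maximal finite subgroups over `C` into the lifts of `C`. The map is only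
needed to respect the action of `L`. -/
def maxFinToLift : maxFinSubgroupsOver L C →[L] subgroupLifts L C where
  toFun H := ⟨H, H.2.1, disjoint_of_finite H.2.2.1⟩
  map_smul' _ _ := rfl

theorem maxFinToLift_injective : Function.Injective (maxFinToLift (L := L) (C := C)) :=
  fun _ _ h => Subtype.ext (congrArg (fun K : subgroupLifts L C => (K : Subgroup Γ)) h)

variable [Finite (Γ ⧸ L)]

theorem range_maxFinToLift (hfree : ConjActsFreely L) (hC : C ≠ ⊥) :
    Set.range (maxFinToLift (L := L) (C := C)) =
      {H : subgroupLifts L C | Subgroup.normalizer ((H : Subgroup Γ) : Set Γ) = H} := by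
  ext H
  refine Iff.trans ?_ (hfree.isMaxFin_iff H.2.2 (ne_bot_of_mem_subgroupLifts hC H.2))
  exact ⟨fun ⟨K, hK⟩ => hK ▸ K.2.2, fun hH => ⟨⟨H, H.2.1, hH⟩, rfl⟩⟩

theorem card_orbits_subgroupLifts_eq_add (hfree : ConjActsFreely L) (hC : C ≠ ⊥)
    (hD : ∀ E, C < E ↔ D ≤ E) [Finite (orbitRel.Quotient L (subgroupLifts L C))] :
    Nat.card (orbitRel.Quotient L (subgroupLifts L C)) =
      Nat.card (orbitRel.Quotient L (maxFinSubgroupsOver L C)) +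
        Nat.card (orbitRel.Quotient L (subgroupLifts L D)) := by
  have hCD : C < D := (hD D).2 le_rfl
  refine card_orbitRel_quotient_eq_add maxFinToLift_injective
    (restrictLift_injective hfree hC hCD.le) ?_
  have hrange : Set.range (restrictLift hCD.le) =
      (Set.range (maxFinToLift (L := L) (C := C)))ᶜ := by
    rw [range_maxFinToLift hfree hC]
    exact Set.ext (exists_restrictLift_eq_iff hfree hC hD hCD.le)
  exact hrange ▸ isCompl_compl

theorem subgroupLifts_top_eq : subgroupLifts L ⊤ = maxFinSubgroupsOver L ⊤ := by
  ext H
  constructor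
  · rintro ⟨hmap, hH⟩
    refine ⟨hmap, finite_of_disjoint hH, fun K hK hHK => ?_⟩
    refine eq_of_map_mk'_eq (disjoint_of_finite hK) hHK le_rfl (hmap.trans (Eq.symm ?_))
    exact top_unique (hmap.ge.trans (Subgroup.map_mono hHK))
  · exact fun hH => ⟨hH.1, disjoint_of_finite hH.2.1⟩

theorem sup_stabilizer_eq_comap (hfree : ConjActsFreely L) (hC : C ≠ ⊥)
    (H : maxFinSubgroupsOver L C) :
    L ⊔ stabilizer Γ H = C.comap (QuotientGroup.mk' L) := by
  have hH : (H : Subgroup Γ) ∈ subgroupLifts L C := (maxFinToLift H).2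
  have hcomap := Subgroup.comap_map_eq (QuotientGroup.mk' L) (H : Subgroup Γ)
  rw [hH.1, QuotientGroup.ker_mk'] at hcomap
  rw [SubMulAction.stabilizer_of_subMul, stabilizer_eq_normalizer,
    (hfree.isMaxFin_iff hH.2 (ne_bot_of_mem_subgroupLifts hC hH)).1 H.2.2, hcomap, sup_comm]

theorem finite_maxFinClassesOver (hfree : ConjActsFreely L) (hC : C ≠ ⊥)
    [Finite (orbitRel.Quotient L (subgroupLifts L C))] : Finite (MaxFinClassesOver Γ L C) := by
  have := Finite.of_injective _
    (orbitMap_injective (maxFinToLift_injective (L := L) (C := C)))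
  have := finite_orbitRel_quotient_of_sup_stabilizer_eq (sup_stabilizer_eq_comap hfree hC)
  exact .of_equiv _ (maxFinClassesOverEquiv L C).symm

theorem card_maxFinClassesOver_mul_index (hfree : ConjActsFreely L) (hC : C ≠ ⊥) :
    Nat.card (MaxFinClassesOver Γ L C) * C.index =
      Nat.card (orbitRel.Quotient L (maxFinSubgroupsOver L C)) := by
  rw [Nat.card_congr (maxFinClassesOverEquiv L C),
    ← card_orbitRel_quotient_mul_index (sup_stabilizer_eq_comap hfree hC),
    Subgroup.index_comap_of_surjective _ (QuotientGroup.mk'_surjective L)]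

end MaximalFinite

end Lifts

end ConjugationOfSubgroups

section CountingLifts

open MulAction Module
open scoped IsMulCommutative

attribute [local instance] conjSubgroupAction

variable {Γ : Type*} [Group Γ] (L : Subgroup Γ) [L.Normal] [IsMulCommutative L]

/-- The action of `Γ` on the abelian group `L` by conjugation, with `L` written additively. -/
def conjRep : Representation ℤ Γ (Additive L) :=
  (Representation.ofMulDistribMulAction (ConjAct Γ) L).comp ConjAct.toConjAct.toMonoidHom

variable {L}

theorem conjRep_eq_one {γ : Γ} (hγ : γ ∈ L) : conjRep L γ = 1 := by
  ext x
  have hcomm := congrArg Subtype.val (mul_comm (⟨γ, hγ⟩ : L) x.toMul)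
  exact mul_inv_eq_of_eq_mul hcomm

theorem ConjActsFreely.eq_zero_of_conjRep_eq_self (hfree : ConjActsFreely L) {γ : Γ} (hγ : γ ∉ L)
    {x : Additive L} (hx : conjRep L γ x = x) : x = 0 := by
  by_contra hne
  exact hfree γ hγ x.toMul x.toMul.2 (fun h => hne (Subtype.ext h)) (congrArg Subtype.val hx)

variable [IsMulCommutative (Γ ⧸ L)]

/-- The lifts of the cyclic group generated by the image of `c` are the groups generated by the
elements `v * c` with `v ∈ L`. -/
noncomputable def liftsZPowersEquiv (hfree : ConjActsFreely L) {c : Γ} (hc : c ∉ L) :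
    Additive L ≃ subgroupLifts L (Subgroup.zpowers (c : Γ ⧸ L)) :=
  .ofBijective (fun v => ⟨_, zpowers_mem_subgroupLifts hfree v.toMul.2 hc⟩) <| by
    constructor
    · intro v w hvw
      have hle : Subgroup.zpowers ((w.toMul : Γ) * c) ≤ Subgroup.zpowers ((v.toMul : Γ) * c) :=
        (congrArg Subtype.val hvw).ge
      have hvw := injOn_mk'_of_disjoint (zpowers_mem_subgroupLifts hfree v.toMul.2 hc).2
        (Subgroup.mem_zpowers _) (hle (Subgroup.mem_zpowers _)) 
        ((mk'_mul_of_mem v.toMul.2 c).trans (mk'_mul_of_mem w.toMul.2 c).symm)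
      exact Subtype.ext (mul_right_cancel hvw)
    · rintro ⟨H, hH⟩
      obtain ⟨h, hh, hhc⟩ := hH.1.ge (Subgroup.mem_zpowers (c : Γ ⧸ L))
      let v : Additive L := .ofMul ⟨h * c⁻¹, by
        rw [← div_eq_mul_inv]
        exact QuotientGroup.eq_iff_div_mem.1 hhc⟩
      have hv : (v.toMul : Γ) * c = h := inv_mul_cancel_right h c
      refine ⟨v, Subtype.ext <| eq_of_map_mk'_eq hH.2 ?_ le_rfl
        ((zpowers_mem_subgroupLifts hfree v.toMul.2 hc).1.trans hH.1.symm)⟩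
      exact Subgroup.zpowers_le.2 (hv.symm ▸ hh)

theorem smul_liftsZPowersEquiv (hfree : ConjActsFreely L) {c : Γ} (hc : c ∉ L) (l : L)
    (v : Additive L) : l • liftsZPowersEquiv hfree hc v =
      liftsZPowersEquiv hfree hc (v + (1 - conjRep L c) (Additive.ofMul l)) := by
  refine Subtype.ext <| (MonoidHom.map_zpowers (MulAut.conj (l : Γ)).toMonoidHom _).trans
    (congrArg Subgroup.zpowers ?_)
  have hcomm : (l : Γ) * v.toMul = v.toMul * l := congrArg Subtype.val (mul_comm l v.toMul)
  calc (l : Γ) * (v.toMul * c) * (l : Γ)⁻¹ = l * v.toMul * (c * (l : Γ)⁻¹) := by group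
    _ = v.toMul * (l * (c * l * c⁻¹)⁻¹) * c := by rw [hcomm]; group
    _ = v.toMul * (l / (c * l * c⁻¹)) * c := by rw [div_eq_mul_inv]

/-- Since `l ∈ L` conjugates `v * c` into `(v + (1 - c) • l) * c`, the `L`-conjugacy classes of
lifts of `⟨cL⟩` form the group of coinvariants `L ⧸ (1 - c) L`. -/
noncomputable def quotientRangeEquivOrbits (hfree : ConjActsFreely L) {c : Γ} (hc : c ∉ L) :
    (Additive L ⧸ LinearMap.range (1 - conjRep L c)) ≃
      orbitRel.Quotient L (subgroupLifts L (Subgroup.zpowers (c : Γ ⧸ L))) :=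
  Quotient.congr (liftsZPowersEquiv hfree hc) fun v w => by
    rw [Submodule.quotientRel_def, orbitRel_apply, mem_orbit_iff]
    simp only [smul_liftsZPowersEquiv, EmbeddingLike.apply_eq_iff_eq, LinearMap.mem_range]
    exact exists_congr fun l => eq_sub_iff_add_eq'

theorem exists_finrank_eq_and_card_orbits_eq_prime_pow [Module.Free ℤ (Additive L)]
    [Module.Finite ℤ (Additive L)] [IsCyclic (Γ ⧸ L)] (hfree : ConjActsFreely L) {p q : ℕ}
    (hp : p.Prime) {C : Subgroup (Γ ⧸ L)} (hC : Nat.card C = p ^ (q + 1)) :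
    ∃ k, finrank ℤ (Additive L) = (p ^ (q + 1)).totient * k ∧
      Nat.card (orbitRel.Quotient L (subgroupLifts L C)) = p ^ k := by
  obtain ⟨c, rfl⟩ : ∃ c : Γ, Subgroup.zpowers (c : Γ ⧸ L) = C := by
    obtain ⟨x, hx⟩ := C.isCyclic_iff_exists_zpowers_eq_top.1 inferInstance
    obtain ⟨c, rfl⟩ := QuotientGroup.mk_surjective x
    exact ⟨c, hx⟩
  rw [Nat.card_zpowers] at hC
  have hpow (i : ℕ) : c ^ i ∈ L ↔ p ^ (q + 1) ∣ i := by
    rw [← hC, orderOf_dvd_iff_pow_eq_one, ← QuotientGroup.mk_pow, QuotientGroup.eq_one_iff]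
  have hcq : c ^ p ^ q ∉ L := by
    rw [hpow, Nat.pow_dvd_pow_iff_le_right hp.one_lt]
    exact q.lt_succ_self.not_ge
  have hc : c ∉ L := fun h => hcq (L.pow_mem h _)
  rw [← Nat.card_congr (quotientRangeEquivOrbits hfree hc)]
  apply exists_finrank_eq_and_card_quotient_eq_prime_pow hp
  · rw [← map_pow, conjRep_eq_one ((hpow _).2 dvd_rfl)]
  · intro v hv
    rw [← map_pow] at hv
    exact hfree.eq_zero_of_conjRep_eq_self hcq hv

theorem totient_prime_pow_eq_mul_pow_sub {p : ℕ} (hp : p.Prime) {j r : ℕ} (hj : 1 ≤ j)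
    (hjr : j ≤ r) : (p ^ r).totient = (p ^ j).totient * p ^ (r - j) := by
  have hexp : r - 1 = j - 1 + (r - j) := by lia
  rw [Nat.totient_prime_pow hp hj, Nat.totient_prime_pow hp (hj.trans hjr), hexp, pow_add,
    mul_right_comm]

theorem card_orbits_subgroupLifts [Module.Free ℤ (Additive L)]
    [Module.Finite ℤ (Additive L)] [IsCyclic (Γ ⧸ L)] (hfree : ConjActsFreely L) {p r j k : ℕ}
    (hp : p.Prime) (hrank : finrank ℤ (Additive L) = (p ^ r).totient * k) (hj : 1 ≤ j)
    (hjr : j ≤ r) {C : Subgroup (Γ ⧸ L)} (hC : Nat.card C = p ^ j) :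
    Nat.card (orbitRel.Quotient L (subgroupLifts L C)) = p ^ (k * p ^ (r - j)) := by
  obtain ⟨k', hk', hcard⟩ : ∃ k', finrank ℤ (Additive L) = (p ^ j).totient * k' ∧
      Nat.card (orbitRel.Quotient L (subgroupLifts L C)) = p ^ k' := by
    obtain ⟨q, rfl⟩ := Nat.exists_eq_add_of_le' hj
    exact exists_finrank_eq_and_card_orbits_eq_prime_pow hfree hp hC
  rw [hrank, totient_prime_pow_eq_mul_pow_sub hp hj hjr, mul_assoc] at hk'
  have hpos : 0 < (p ^ j).totient := Nat.totient_pos.2 (pow_pos hp.pos j)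
  rw [hcard, ← Nat.eq_of_mul_eq_mul_left hpos hk', mul_comm]

end CountingLifts

section PrimePowerSubgroups

open scoped IsMulCommutative

variable {G : Type*} [Group G]

theorem ne_bot_of_card_eq_prime_pow {C : Subgroup G} {p j : ℕ} (hp : p.Prime)
    (hj : 1 ≤ j) (hC : Nat.card C = p ^ j) : C ≠ ⊥ := by
  rintro rfl
  exact (Nat.one_lt_pow (Nat.one_le_iff_ne_zero.1 hj) hp.one_lt).ne
    (Subgroup.card_bot.symm.trans hC)

variable [IsCyclic G] [Finite G]

-- A subgroup of order `d` is the `d`-torsion subgroup, which has only `d` elements.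
theorem le_iff_card_dvd_card_of_isCyclic {H K : Subgroup G} :
    H ≤ K ↔ Nat.card H ∣ Nat.card K := by
  refine ⟨Subgroup.card_dvd_of_le, fun h => ?_⟩
  have le_torsion {E : Subgroup G} (hE : Nat.card E ∣ Nat.card K) :
      E ≤ (powMonoidHom (Nat.card K) : G →* G).ker := fun x hx =>
    orderOf_dvd_iff_pow_eq_one.1 ((E.orderOf_dvd_natCard hx).trans hE)
  have hcard : Nat.card (powMonoidHom (Nat.card K) : G →* G).ker = Nat.card K := by
    rw [IsCyclic.card_powMonoidHom_ker, Nat.gcd_eq_right K.card_subgroup_dvd_card]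
  rw [Subgroup.eq_of_le_of_card_ge (le_torsion dvd_rfl) hcard.le]
  exact le_torsion h

theorem exists_card_eq_pow_succ_and_forall_lt_iff_le {p r j : ℕ} (hp : p.Prime)
    (hG : Nat.card G = p ^ r) (hjr : j < r) {C : Subgroup G} (hC : Nat.card C = p ^ j) :
    ∃ D : Subgroup G, Nat.card D = p ^ (j + 1) ∧ ∀ E, C < E ↔ D ≤ E := by
  have := Fact.mk hp
  obtain ⟨D, hD⟩ := Sylow.exists_subgroup_card_pow_prime p (hG ▸ pow_dvd_pow p hjr)
  refine ⟨D, hD, fun E => ?_⟩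
  obtain ⟨i, -, hi⟩ := (Nat.dvd_prime_pow hp).1 (hG ▸ E.card_subgroup_dvd_card)
  simp only [lt_iff_le_not_ge, le_iff_card_dvd_card_of_isCyclic, hC, hD, hi,
    Nat.pow_dvd_pow_iff_le_right hp.one_lt]
  exact lt_iff_le_not_ge.symm

end PrimePowerSubgroups

section CountingMaximalFinite

open Module
open scoped IsMulCommutative

theorem free_finite_and_finrank_eq_card_of_mulEquiv {A ι : Type*} [Group A] [IsMulCommutative A]
    [Fintype ι] (e : A ≃* Multiplicative (ι → ℤ)) :
    Module.Free ℤ (Additive A) ∧ Module.Finite ℤ (Additive A) ∧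
      finrank ℤ (Additive A) = Fintype.card ι := by
  let f : Additive A ≃ₗ[ℤ] (ι → ℤ) := (MulEquiv.toAdditiveLeft e).toIntLinearEquiv
  exact ⟨.of_equiv f.symm, .equiv f.symm, f.finrank_eq.trans (finrank_fintype_fun_eq_card ℤ)⟩

variable {Γ : Type*} [Group Γ] {L : Subgroup Γ} [L.Normal] [IsMulCommutative L]
  [Module.Free ℤ (Additive L)] [Module.Finite ℤ (Additive L)] [IsCyclic (Γ ⧸ L)] {p r j k : ℕ}

theorem exists_finrank_eq_totient_mul (hfree : ConjActsFreely L) (hp : p.Prime) (hr : 1 ≤ r)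
    (hcard : Nat.card (Γ ⧸ L) = p ^ r) : ∃ k, finrank ℤ (Additive L) = (p ^ r).totient * k := by
  obtain ⟨q, rfl⟩ := Nat.exists_eq_add_of_le' hr
  obtain ⟨k, hk, -⟩ := exists_finrank_eq_and_card_orbits_eq_prime_pow hfree hp
    (C := ⊤) (Subgroup.card_top.trans hcard)
  exact ⟨k, hk⟩

theorem finite_orbits_subgroupLifts (hfree : ConjActsFreely L) (hp : p.Prime)
    (hrank : finrank ℤ (Additive L) = (p ^ r).totient * k) (hj : 1 ≤ j) (hjr : j ≤ r)
    {C : Subgroup (Γ ⧸ L)} (hC : Nat.card C = p ^ j) :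
    Finite (MulAction.orbitRel.Quotient L (subgroupLifts L C)) :=
  Nat.finite_of_card_ne_zero <|
    (card_orbits_subgroupLifts hfree hp hrank hj hjr hC).trans_ne (pow_ne_zero _ hp.ne_zero)

variable [IsMulTorsionFree L] [Finite (Γ ⧸ L)]

theorem card_maxFinClassesOver_top (hfree : ConjActsFreely L) (hp : p.Prime) (hr : 1 ≤ r)
    (hcard : Nat.card (Γ ⧸ L) = p ^ r)
    (hrank : finrank ℤ (Additive L) = (p ^ r).totient * k) :
    Nat.card (MaxFinClassesOver Γ L ⊤) = p ^ k := by
  have htop := Subgroup.card_top.trans hcard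
  have hcount := card_maxFinClassesOver_mul_index hfree (ne_bot_of_card_eq_prime_pow hp hr htop)
  rwa [Subgroup.index_top, mul_one, ← subgroupLifts_top_eq,
    card_orbits_subgroupLifts hfree hp hrank hr le_rfl htop, Nat.sub_self, pow_zero, mul_one]
    at hcount

theorem card_maxFinClassesOver_mul_pow_add (hfree : ConjActsFreely L) (hp : p.Prime)
    (hcard : Nat.card (Γ ⧸ L) = p ^ r) (hrank : finrank ℤ (Additive L) = (p ^ r).totient * k)
    (hj : 1 ≤ j) (hjr : j < r) {C : Subgroup (Γ ⧸ L)} (hC : Nat.card C = p ^ j) :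
    Nat.card (MaxFinClassesOver Γ L C) * p ^ (r - j) + p ^ (k * p ^ (r - j - 1)) =
      p ^ (k * p ^ (r - j)) := by
  have hbot := ne_bot_of_card_eq_prime_pow hp hj hC
  obtain ⟨D, hDcard, hD⟩ := exists_card_eq_pow_succ_and_forall_lt_iff_le hp hcard hjr hC
  have := finite_orbits_subgroupLifts hfree hp hrank hj hjr.le hC
  have hindex : C.index = p ^ (r - j) := by
    rw [← Nat.mul_right_inj (pow_ne_zero j hp.ne_zero), ← hC, C.card_mul_index, hcard, hC,
      ← pow_add, Nat.add_sub_cancel' hjr.le]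
  rw [← card_orbits_subgroupLifts hfree hp hrank hj hjr.le hC, Nat.sub_sub,
    ← card_orbits_subgroupLifts hfree hp hrank (Nat.le_add_left 1 j) hjr hDcard, ← hindex,
    card_maxFinClassesOver_mul_index hfree hbot, card_orbits_subgroupLifts_eq_add hfree hbot hD]

theorem card_maxFinClassesOver_of_lt (hfree : ConjActsFreely L) (hp : p.Prime)
    (hcard : Nat.card (Γ ⧸ L) = p ^ r) (hrank : finrank ℤ (Additive L) = (p ^ r).totient * k)
    (hk : k ≠ 0) (hj : 1 ≤ j) (hjr : j < r) {C : Subgroup (Γ ⧸ L)} (hC : Nat.card C = p ^ j) :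
    Nat.card (MaxFinClassesOver Γ L C) =
      p ^ (k * p ^ (r - j) + j - r) - p ^ (k * p ^ (r - j - 1) + j - r) := by
  have hle : r - j ≤ k * p ^ (r - j - 1) := by
    have hlt : r - j - 1 < p ^ (r - j - 1) := Nat.lt_pow_self hp.one_lt
    have hmul : p ^ (r - j - 1) ≤ k * p ^ (r - j - 1) :=
      Nat.le_mul_of_pos_left _ (Nat.pos_of_ne_zero hk)
    lia
  have hle' : k * p ^ (r - j - 1) ≤ k * p ^ (r - j) :=
    Nat.mul_le_mul_left k (Nat.pow_le_pow_right hp.pos (Nat.sub_le _ 1))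
  have hpos : 0 < p ^ (r - j) := pow_pos hp.pos _
  apply Nat.eq_of_mul_eq_mul_right hpos
  rw [← Nat.sub_sub_right _ hjr.le, ← Nat.sub_sub_right _ hjr.le, Nat.sub_mul,
    pow_sub_mul_pow p (hle.trans hle'), pow_sub_mul_pow p hle]
  exact Nat.eq_sub_of_add_eq (card_maxFinClassesOver_mul_pow_add hfree hp hcard hrank hj hjr hC)

end CountingMaximalFinite

/-- Suppose `m = p^r` for a prime `p` and `r ≥ 1` in the setting of the paper (`L ≅ ℤⁿ` normal
in `Γ`, `G = Γ/L` cyclic of order `m`, conjugation action free outside the origin).  Then there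
is a unique natural number `k` with `n = (p−1)·p^{r−1}·k`, and for `1 ≤ j ≤ r` and `G_j ⊆ G` the
subgroup of order `p^j`, the set `ℳ(G_j)` is finite with
`|ℳ(G_j)| = p^{k·p^{r−j} − r + j} − p^{k·p^{r−j−1} − r + j}` for `j ≤ r−1` and
`|ℳ(G_r)| = p^k`. -/
theorem statement11 (n m p r j : ℕ) (hn : 1 ≤ n) (hp : p.Prime) (hr : 1 ≤ r) (hm : m = p ^ r)
    (hj1 : 1 ≤ j) (hjr : j ≤ r)
    (Γ : Type*) [Group Γ] (L : Subgroup Γ) [L.Normal]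
    (hL : Nonempty (L ≃* Multiplicative (Fin n → ℤ)))
    (hcyc : IsCyclic (Γ ⧸ L)) (hcard : Nat.card (Γ ⧸ L) = m)
    (hfree : ∀ γ : Γ, γ ∉ L → ∀ x : Γ, x ∈ L → x ≠ 1 → γ * x * γ⁻¹ ≠ x)
    (Gj : Subgroup (Γ ⧸ L)) (hGj : Nat.card Gj = p ^ j) :
    (∃! k : ℕ, n = (p - 1) * p ^ (r - 1) * k) ∧
    ∀ k : ℕ, n = (p - 1) * p ^ (r - 1) * k →
      Finite (MaxFinClassesOver Γ L Gj) ∧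
      (j ≤ r - 1 → Nat.card (MaxFinClassesOver Γ L Gj) =
        p ^ (k * p ^ (r - j) + j - r) - p ^ (k * p ^ (r - j - 1) + j - r)) ∧
      (j = r → Nat.card (MaxFinClassesOver Γ L Gj) = p ^ k) := by
  subst hm
  have e := hL.some
  have : IsMulCommutative L := ⟨⟨fun x y => e.injective (by rw [map_mul, map_mul, mul_comm])⟩⟩
  have : IsMulTorsionFree L := e.injective.isMulTorsionFree e.toMonoidHom
  obtain ⟨_, _, hrank⟩ := free_finite_and_finrank_eq_card_of_mulEquiv e
  rw [Fintype.card_fin] at hrank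
  have : Finite (Γ ⧸ L) := Nat.finite_of_card_ne_zero (hcard.trans_ne (pow_ne_zero r hp.ne_zero))
  rw [mul_comm (p - 1), ← Nat.totient_prime_pow hp hr, ← hrank]
  obtain ⟨k₀, hk₀⟩ := exists_finrank_eq_totient_mul hfree hp hr hcard
  have hpos : 0 < (p ^ r).totient := Nat.totient_pos.2 (pow_pos hp.pos r)
  refine ⟨⟨k₀, hk₀, fun k hk => Nat.eq_of_mul_eq_mul_left hpos (hk.symm.trans hk₀)⟩,
    fun k hk => ⟨?_, fun hjr' => ?_, fun hjr' => ?_⟩⟩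
  · have := finite_orbits_subgroupLifts hfree hp hk hj1 hjr hGj
    exact finite_maxFinClassesOver hfree (ne_bot_of_card_eq_prime_pow hp hj1 hGj)
  · refine card_maxFinClassesOver_of_lt hfree hp hcard hk ?_ hj1 (by lia) hGj
    rintro rfl
    exact Nat.ne_of_gt hn (hrank.symm.trans hk)
  · obtain rfl : Gj = ⊤ := Subgroup.eq_top_of_card_eq _ (by rw [hGj, hjr', hcard])
    exact card_maxFinClassesOver_top hfree hp hr hcard hk
end

section
/- The Euler totient φ(m) divides n. Equivalently, if m = p₁^{r₁} ⋯ p_s^{r_s} with distinct primes p_i, then there exists a natural number k with n = k · ∏_{i=1}^{s} (p_i − 1)·p_i^{r_i − 1}. -/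
/-!
A generator of `G` acts by an endomorphism `T` with `T ^ m = 1`, so the product of the `Φ_d(T)` over
all divisors `d` of `m` is `0`. Freeness makes `T ^ d - 1`, hence also its factor `Φ_d(T)`,
injective for `d < m`; therefore `Φ_m(T) = 0`. Since `Φ_m` is irreducible over `ℚ`, this turns
`ℚ ⊗ L` into a vector space over the cyclotomic field `ℚ[X] / (Φ_m)`, whose degree `φ(m)` must then
divide the rank of `L`.
-/

open Module Polynomial
open scoped TensorProduct

section InjectivePolynomials

variable {R M : Type*} [CommRing R] [AddCommGroup M] [Module R M] {T : End R M}

lemma injective_aeval_of_dvd {p q : R[X]} (hpq : p ∣ q) (hq : Function.Injective (aeval T q)) :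
    Function.Injective (aeval T p) := by
  obtain ⟨c, rfl⟩ := hpq
  rw [mul_comm, map_mul, End.mul_eq_comp, LinearMap.coe_comp] at hq
  exact hq.of_comp

lemma injective_aeval_X_pow_sub_one {d : ℕ} (hT : ∀ x, (T ^ d) x = x → x = 0) :
    Function.Injective (aeval T (X ^ d - 1 : R[X])) := by
  refine (injective_iff_map_eq_zero _).2 fun x hx ↦ hT x ?_
  simpa [sub_eq_zero] using hx

lemma injective_aeval_prod {ι : Type*} {s : Finset ι} {p : ι → R[X]}
    (hp : ∀ i ∈ s, Function.Injective (aeval T (p i))) :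
    Function.Injective (aeval T (∏ i ∈ s, p i)) := by
  refine Finset.prod_induction p (fun q ↦ Function.Injective (aeval T q)) (fun q r hq hr ↦ ?_) ?_ hp
  · rw [map_mul, End.mul_eq_comp, LinearMap.coe_comp]
    exact hq.comp hr
  · rw [map_one]
    exact Function.injective_id

theorem aeval_cyclotomic_eq_zero_of_pow_eq_one {m : ℕ} (hm : 0 < m) (hTm : T ^ m = 1)
    (hfix : ∀ d ∈ m.properDivisors, ∀ x, (T ^ d) x = x → x = 0) :
    aeval T (cyclotomic m R) = 0 := by
  have hinj : Function.Injective (aeval T (∏ d ∈ m.properDivisors, cyclotomic d R)) :=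
    injective_aeval_prod fun d hd ↦
      injective_aeval_of_dvd (cyclotomic.dvd_X_pow_sub_one d R)
        (injective_aeval_X_pow_sub_one (hfix d hd))
  have hfactor : (∏ d ∈ m.properDivisors, cyclotomic d R) * cyclotomic m R = X ^ m - 1 := by
    rw [← prod_cyclotomic_eq_X_pow_sub_one hm R, ← Nat.cons_self_properDivisors hm.ne',
      Finset.prod_cons, mul_comm]
  have hcomp : aeval T (∏ d ∈ m.properDivisors, cyclotomic d R) * aeval T (cyclotomic m R) = 0 := by
    rw [← map_mul, hfactor, map_sub, map_pow, aeval_X, hTm, map_one, sub_self]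
  ext x
  exact (injective_iff_map_eq_zero _).1 hinj _ (LinearMap.congr_fun hcomp x)

end InjectivePolynomials

section RankDivisibility

universe u v

lemma natCast_dvd_lift_iff {n : ℕ} {c : Cardinal.{u}} :
    (n : Cardinal) ∣ Cardinal.lift.{v} c ↔ (n : Cardinal) ∣ c := by
  constructor
  · rintro ⟨d, hd⟩
    obtain rfl | hn := n.eq_zero_or_pos
    · simpa using hd
    have hle : d ≤ Cardinal.lift.{v} c := hd ▸ le_mul_of_one_le_left' (mod_cast hn)
    obtain ⟨e, rfl⟩ := Cardinal.mem_range_lift_of_le hle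
    exact ⟨e, Cardinal.lift_injective <| by rw [hd, Cardinal.lift_mul, Cardinal.lift_natCast]⟩
  · rintro ⟨d, rfl⟩
    exact ⟨Cardinal.lift.{v} d, by rw [Cardinal.lift_mul, Cardinal.lift_natCast]⟩

theorem natDegree_dvd_rank_of_irreducible {K V : Type*} [Field K] [AddCommGroup V] [Module K V]
    {T : End K V} {f : K[X]} (hf : Irreducible f) (hT : aeval T f = 0) :
    (f.natDegree : Cardinal) ∣ Module.rank K V := by
  have : Fact (Irreducible f) := ⟨hf⟩
  let evalT : AdjoinRoot f →ₐ[K] End K V :=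
    Ideal.Quotient.liftₐ (Ideal.span {f}) (aeval T) fun p hp ↦ by
      obtain ⟨q, rfl⟩ := Ideal.mem_span_singleton.1 hp
      rw [map_mul, hT, zero_mul]
  let : Module (AdjoinRoot f) V := Module.compHom V evalT.toRingHom
  have : IsScalarTower K (AdjoinRoot f) V := ⟨fun c a v ↦
    LinearMap.congr_fun (map_smul evalT c a) v⟩
  have hdeg : Module.rank K (AdjoinRoot f) = f.natDegree := by
    have := (AdjoinRoot.powerBasis hf.ne_zero).finite
    rw [← finrank_eq_rank, (AdjoinRoot.powerBasis hf.ne_zero).finrank, AdjoinRoot.powerBasis_dim]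
  rw [← natCast_dvd_lift_iff, ← lift_rank_mul_lift_rank K (AdjoinRoot f) V, hdeg,
    Cardinal.lift_natCast]
  exact dvd_mul_right _ _

theorem natDegree_dvd_rank_of_irreducible_map {R M : Type*} (K : Type*) [CommRing R] [Field K]
    [Algebra R K] [FaithfulSMul R K] [AddCommGroup M] [Module R M] {T : End R M} {f : R[X]}
    (hf : Irreducible (f.map (algebraMap R K))) (hT : aeval T f = 0) :
    (f.natDegree : Cardinal) ∣ Module.rank R M := by
  have hTK : aeval (End.baseChangeHom R K M T) (f.map (algebraMap R K)) = 0 := by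
    rw [aeval_map_algebraMap, aeval_algHom_apply, hT, map_zero]
  have hdvd := natDegree_dvd_rank_of_irreducible hf hTK
  rwa [natDegree_map_eq_of_injective (FaithfulSMul.algebraMap_injective R K),
    ← natCast_dvd_lift_iff, (TensorProduct.isBaseChange R M K).lift_rank_eq,
    natCast_dvd_lift_iff] at hdvd

end RankDivisibility

theorem statement12_general {G M : Type*} [Monoid G] [AddCommGroup M] (ρ : Representation ℤ G M)
    (hfree : ∀ g : G, g ≠ 1 → ∀ x : M, x ≠ 0 → ρ g x ≠ x) {g : G} (hg : IsOfFinOrder g) :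
    (Nat.totient (orderOf g) : Cardinal) ∣ Module.rank ℤ M := by
  have hfix : ∀ d ∈ (orderOf g).properDivisors, ∀ x, (ρ g ^ d) x = x → x = 0 := by
    intro d hd x hx
    have hgd : g ^ d ≠ 1 := pow_ne_one_of_lt_orderOf (Nat.pos_of_mem_properDivisors hd).ne'
      (Nat.mem_properDivisors.1 hd).2
    rw [← map_pow] at hx
    exact not_imp_not.1 (hfree _ hgd x) hx
  have hzero : aeval (ρ g) (cyclotomic (orderOf g) ℤ) = 0 :=
    aeval_cyclotomic_eq_zero_of_pow_eq_one hg.orderOf_pos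
      (by rw [← map_pow, pow_orderOf_eq_one, map_one]) hfix
  have hirr : Irreducible ((cyclotomic (orderOf g) ℤ).map (algebraMap ℤ ℚ)) := by
    rw [map_cyclotomic]
    exact cyclotomic.irreducible_rat hg.orderOf_pos
  simpa only [natDegree_cyclotomic] using natDegree_dvd_rank_of_irreducible_map ℚ hirr hzero

/-- If a cyclic group `G` of order `m` acts on `L = ℤⁿ` (`n ≥ 1`) by group automorphisms and the
action is free outside the origin, then the Euler totient `φ(m)` divides `n`. -/
theorem statement12 (n m : ℕ) (hn : 1 ≤ n) (hm : 1 ≤ m)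
    (G : Type*) [Group G] [IsCyclic G] (hG : Nat.card G = m)
    (ρ : Representation ℤ G (Fin n → ℤ))
    (hfree : ∀ g : G, g ≠ 1 → ∀ x : Fin n → ℤ, x ≠ 0 → ρ g x ≠ x) :
    Nat.totient m ∣ n := by
  obtain ⟨g, hg⟩ := IsCyclic.exists_ofOrder_eq_natCard (α := G)
  have hdvd := statement12_general ρ hfree (orderOf_pos_iff.1 (hm.trans_eq (hg.trans hG).symm))
  rwa [hg, hG, rank_fin_fun, Cardinal.nat_coe_dvd_iff] at hdvd
end

section
/- Let C be a finite cyclic group acting on the free abelian group L = ℤⁿ by group automorphisms such that the action is free outside the origin (for every c ∈ C with c ≠ 1 and every x ∈ L with x ≠ 0, c·x ≠ x). If the order of C is divisible by at least two distinct primes, then the first group cohomology H¹(C; L) vanishes. -/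
/-!
Let `N` be a finite normal subgroup of `G` with `Vᴺ = 0`. The norm `∑ n ∈ N, ρ n` takes values in
`Vᴺ`, hence vanishes. For a 1-cocycle `f`, evaluate `∑ n ∈ N, f (g n) = ∑ n ∈ N, f (n g)` by the
cocycle identity: with `s = ∑ n ∈ N, f n`, the left side is `g s + |N| f g` and the right side is
`s`, so `|N| f` is the coboundary of `-s`, and `|N|` annihilates `H¹(G, V)`. Two such subgroups of
coprime orders therefore force `H¹(G, V) = 0`; in a nilpotent group acting freely outside the
origin, the Sylow subgroups for two distinct prime divisors of the order will do.
-/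

section Invariants

open Representation

variable {k G V : Type*} [CommRing k] [Group G] [AddCommGroup V] [Module k V]
  {ρ : Representation k G V}

theorem norm_eq_zero_of_invariants_eq_bot [Fintype G] (h : ρ.invariants = ⊥) : ρ.norm = 0 := by
  ext v
  have hv : ρ.norm v ∈ ρ.invariants := fun g => ρ.self_norm_apply g v
  rwa [h, Submodule.mem_bot] at hv

theorem invariants_comp_subtype_eq_bot_of_free
    (hfree : ∀ g : G, g ≠ 1 → ∀ v : V, v ≠ 0 → ρ g v ≠ v) {N : Subgroup G} (hN : N ≠ ⊥) :
    invariants (ρ.comp N.subtype) = ⊥ := by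
  obtain ⟨g, hg⟩ := Subgroup.ne_bot_iff_exists_ne_one.mp hN
  refine (Submodule.eq_bot_iff _).mpr fun v hv => ?_
  by_contra hv0
  exact hfree g (mt OneMemClass.coe_eq_one.mp hg) v hv0 (hv g)

end Invariants

section FirstCohomology

open Representation groupCohomology

universe u

variable {k G : Type u} [CommRing k] [Group G]

section NormalSubgroup

variable {A : Rep.{u} k G} {N : Subgroup G} [N.Normal]

theorem rep_apply_sum_cocycle_add_card_smul [Fintype N]
    (hN : invariants (A.ρ.comp N.subtype) = ⊥) (f : cocycles₁ A) (g : G) :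
    A.ρ g (∑ n : N, f n) + Fintype.card N • f g = ∑ n : N, f n := by
  have hf : ∀ x y : G, f (x * y) = A.ρ x (f y) + f x := (mem_cocycles₁_iff f).mp f.2
  calc A.ρ g (∑ n : N, f n) + Fintype.card N • f g
      = ∑ n : N, f (g * n) := by
        simp only [hf, map_sum, Finset.sum_add_distrib, Finset.sum_const, Finset.card_univ]
    _ = ∑ n : N, f (MulAut.conjNormal g n * g) := by
        simp only [MulAut.conjNormal_apply, inv_mul_cancel_right]
    _ = ∑ n : N, f (n * g) :=
        (MulAut.conjNormal g).toEquiv.sum_comp fun n : N => f (n * g)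
    _ = Representation.norm (A.ρ.comp N.subtype) (f g) + ∑ n : N, f n := by
        simp [hf, Finset.sum_add_distrib, Representation.norm]
    _ = ∑ n : N, f n := by
        rw [norm_eq_zero_of_invariants_eq_bot hN, LinearMap.zero_apply, zero_add]

theorem card_smul_H1_eq_zero [Finite N] (hN : invariants (A.ρ.comp N.subtype) = ⊥) (x : H1 A) :
    (Nat.card N : k) • x = 0 := by
  have := Fintype.ofFinite N
  induction x using H1_induction_on with
  | h f =>
    rw [← map_smul, H1π_eq_zero_iff]
    refine ⟨-∑ n : N, f n, funext fun g => ?_⟩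
    change A.ρ g (-∑ n : N, f n) - -∑ n : N, f n = (Nat.card N : k) • f g
    rw [map_neg, neg_sub_neg, Nat.cast_smul_eq_nsmul, Nat.card_eq_fintype_card,
      sub_eq_iff_eq_add', rep_apply_sum_cocycle_add_card_smul hN f g]

end NormalSubgroup

theorem subsingleton_H1_of_isCoprime_card {A : Rep.{u} k G} {M N : Subgroup G}
    [M.Normal] [N.Normal] [Finite M] [Finite N]
    (hM : invariants (A.ρ.comp M.subtype) = ⊥) (hN : invariants (A.ρ.comp N.subtype) = ⊥)
    (hMN : IsCoprime (Nat.card M : k) (Nat.card N : k)) : Subsingleton (H1 A) := by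
  obtain ⟨a, b, hab⟩ := hMN
  refine subsingleton_of_forall_eq 0 fun x => ?_
  calc x = (a * Nat.card M + b * Nat.card N : k) • x := by rw [hab, one_smul]
    _ = 0 := by
      rw [add_smul, mul_smul, mul_smul, card_smul_H1_eq_zero hM, card_smul_H1_eq_zero hN,
        smul_zero, smul_zero, add_zero]

theorem statement14_general [Finite G] [Group.IsNilpotent G] {V : Type u} [AddCommGroup V]
    [Module k V] (ρ : Representation k G V)
    (hfree : ∀ g : G, g ≠ 1 → ∀ v : V, v ≠ 0 → ρ g v ≠ v)
    (hpq : ∃ p q : ℕ, p.Prime ∧ q.Prime ∧ p ≠ q ∧ p ∣ Nat.card G ∧ q ∣ Nat.card G) :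
    Subsingleton (groupCohomology (Rep.of ρ) 1) := by
  obtain ⟨p, q, hp, hq, hne, hpG, hqG⟩ := hpq
  have : Fact p.Prime := ⟨hp⟩
  have : Fact q.Prime := ⟨hq⟩
  let P : Sylow p G := default
  let Q : Sylow q G := default
  have hPQ : (Nat.card P).Coprime (Nat.card Q) :=
    IsPGroup.coprime_card_of_ne p q hne _ _ P.isPGroup' Q.isPGroup'
  exact subsingleton_H1_of_isCoprime_card
    (invariants_comp_subtype_eq_bot_of_free hfree (P.ne_bot_of_dvd_card hpG))
    (invariants_comp_subtype_eq_bot_of_free hfree (Q.ne_bot_of_dvd_card hqG)) hPQ.cast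

end FirstCohomology

/-- Let `C` be a finite cyclic group acting on `L = ℤⁿ` by group automorphisms such that the
action is free outside the origin.  If the order of `C` is divisible by at least two distinct
primes, then the first group cohomology `H¹(C; L)` vanishes. -/
theorem statement14 (n : ℕ) (hn : 1 ≤ n)
    (C : Type) [Group C] [Finite C] [IsCyclic C]
    (ρ : Representation ℤ C (Fin n → ℤ))
    (hfree : ∀ c : C, c ≠ 1 → ∀ x : Fin n → ℤ, x ≠ 0 → ρ c x ≠ x)
    (hpq : ∃ p q : ℕ, p.Prime ∧ q.Prime ∧ p ≠ q ∧ p ∣ Nat.card C ∧ q ∣ Nat.card C) :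
    Subsingleton (groupCohomology (Rep.of ρ) 1) := by
  have : Group.IsNilpotent C := @CommGroup.isNilpotent C IsCyclic.commGroup
  exact statement14_general ρ hfree hpq
end
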